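/- arXiv:1811.12588 — 8 statements merged into one kernel-verified Lean document; each statement's English description precedes it below -/
import Mathlib

section
/- Let C be a 2-Calabi–Yau triangulated category with a cluster tilting subcategory R, and let X be a functorially finite rigid subcategory of C. Then C has a cluster tilting subcategory Y which contains X. -/
/-!
Setting: `C` is a Hom-finite Krull–Schmidt `k`-linear triangulated category over an
algebraically closed field `k` (Krull–Schmidt is encoded as Hom-finiteness together with
idempotent completeness). Subcategories are identified with their classes of objects and
are always assumed full, closed under isomorphisms, direct sums and direct summands.
-/

open CategoryTheory CategoryTheory.Limits CategoryTheory.Pretriangulated Opposite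

universe v u

variable {C : Type u} [Category.{v} C] [Preadditive C] [HasZeroObject C] [HasShift C ℤ]
  [∀ n : ℤ, (shiftFunctor C n).Additive] [Pretriangulated C]

/-- `Y` is a direct summand (retract) of `X`. -/
def IsRetractOf {D : Type*} [Category D] (Y X : D) : Prop :=
  ∃ (s : Y ⟶ X) (r : X ⟶ Y), s ≫ r = 𝟙 Y

/-- `S` is a direct sum (biproduct) of `F` and `G`. -/
def IsDirectSumOf {D : Type*} [Category D] [Preadditive D] (S F G : D) : Prop :=
  ∃ (i : F ⟶ S) (j : G ⟶ S) (p : S ⟶ F) (q : S ⟶ G),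
    i ≫ p = 𝟙 F ∧ j ≫ q = 𝟙 G ∧ i ≫ q = 0 ∧ j ≫ p = 0 ∧ p ≫ i + q ≫ j = 𝟙 S

/-- A subcategory of an additive category, identified with its class of objects:
closed under isomorphisms, finite direct sums and direct summands. -/
def IsSubcat {D : Type*} [Category D] [Preadditive D] (S : Set D) : Prop :=
  (∀ ⦃X Y : D⦄, (X ≅ Y) → X ∈ S → Y ∈ S) ∧
  (∀ ⦃F G T : D⦄, F ∈ S → G ∈ S → IsDirectSumOf T F G → T ∈ S) ∧
  (∀ ⦃X Y : D⦄, X ∈ S → IsRetractOf Y X → Y ∈ S)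

/-- `f : X ⟶ A` is a right `𝓧`-approximation of `A`:
every map `X' ⟶ A` with `X' ∈ 𝓧` factors through `f`. -/
def IsRightApprox {D : Type*} [Category D] (𝓧 : Set D) {X A : D} (f : X ⟶ A) : Prop :=
  ∀ X' ∈ 𝓧, ∀ g : X' ⟶ A, ∃ h : X' ⟶ X, h ≫ f = g

/-- `f : A ⟶ X` is a left `𝓧`-approximation of `A`:
every map `A ⟶ X'` with `X' ∈ 𝓧` factors through `f`. -/
def IsLeftApprox {D : Type*} [Category D] (𝓧 : Set D) {A X : D} (f : A ⟶ X) : Prop :=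
  ∀ X' ∈ 𝓧, ∀ g : A ⟶ X', ∃ h : X ⟶ X', f ≫ h = g

/-- `𝓧` is contravariantly finite: every object admits a right `𝓧`-approximation. -/
def ContravariantlyFinite {D : Type*} [Category D] (𝓧 : Set D) : Prop :=
  ∀ A : D, ∃ X ∈ 𝓧, ∃ f : X ⟶ A, IsRightApprox 𝓧 f

/-- `𝓧` is covariantly finite: every object admits a left `𝓧`-approximation. -/
def CovariantlyFinite {D : Type*} [Category D] (𝓧 : Set D) : Prop :=
  ∀ A : D, ∃ X ∈ 𝓧, ∃ f : A ⟶ X, IsLeftApprox 𝓧 f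

/-- `𝓧` is functorially finite. -/
def FunctoriallyFinite {D : Type*} [Category D] (𝓧 : Set D) : Prop :=
  ContravariantlyFinite 𝓧 ∧ CovariantlyFinite 𝓧

/-- `𝓧 ∨ add M`: the smallest subcategory containing `𝓧` and `M`. -/
def veeAdd {D : Type*} [Category D] [Preadditive D] (𝓧 : Set D) (M : D) : Set D :=
  ⋂₀ {T : Set D | IsSubcat T ∧ 𝓧 ⊆ T ∧ M ∈ T}

/-- The shift `𝓢⟦n⟧` of a subcategory (closed under isomorphism). -/
def shiftSet (𝓢 : Set C) (n : ℤ) : Set C := {Y | ∃ X ∈ 𝓢, Nonempty (Y ≅ X⟦n⟧)}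

/-- `𝓐 ∗ 𝓑`: the class of objects `M` admitting a distinguished triangle
`A → M → B → A⟦1⟧` with `A ∈ 𝓐` and `B ∈ 𝓑`. -/
def starSet (𝓐 𝓑 : Set C) : Set C :=
  {M | ∃ A ∈ 𝓐, ∃ B ∈ 𝓑, ∃ (f : A ⟶ M) (g : M ⟶ B) (h : B ⟶ A⟦(1:ℤ)⟧),
    Triangle.mk f g h ∈ distTriang C}

/-- `𝓡 ∗ 𝓡[1]`, the class of two-term objects with respect to `𝓡`. -/
def twoTerm (𝓡 : Set C) : Set C := starSet 𝓡 (shiftSet 𝓡 1)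

/-- `𝓡` is rigid: `Hom(R, R'[1]) = 0` for all `R, R' ∈ 𝓡`. -/
def IsRigidSubcat (𝓡 : Set C) : Prop :=
  ∀ R ∈ 𝓡, ∀ R' ∈ 𝓡, ∀ φ : R ⟶ R'⟦(1:ℤ)⟧, φ = 0

/-- `φ` lies in the ideal `[𝓡[1]]` of morphisms factoring through an object of `𝓡⟦1⟧`. -/
def InShiftIdeal (𝓡 : Set C) {A B : C} (φ : A ⟶ B) : Prop :=
  ∃ R ∈ 𝓡, ∃ (a : A ⟶ R⟦(1:ℤ)⟧) (b : R⟦(1:ℤ)⟧ ⟶ B), φ = a ≫ b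

/-- `𝓧` is `𝓡[1]`-rigid: `[𝓡[1]](𝓧, 𝓧[1]) = 0`. -/
def IsRelRigid (𝓡 𝓧 : Set C) : Prop :=
  ∀ X ∈ 𝓧, ∀ X' ∈ 𝓧, ∀ φ : X ⟶ X'⟦(1:ℤ)⟧, InShiftIdeal 𝓡 φ → φ = 0

/-- `[𝓡[1]](M, 𝓧[1]) = 0`. -/
def relOrthTo (𝓡 𝓧 : Set C) (M : C) : Prop :=
  ∀ X ∈ 𝓧, ∀ φ : M ⟶ X⟦(1:ℤ)⟧, InShiftIdeal 𝓡 φ → φ = 0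

/-- `[𝓡[1]](𝓧, M[1]) = 0`. -/
def relOrthFrom (𝓡 𝓧 : Set C) (M : C) : Prop :=
  ∀ X ∈ 𝓧, ∀ φ : X ⟶ M⟦(1:ℤ)⟧, InShiftIdeal 𝓡 φ → φ = 0

/-- `𝓧 ⊆ 𝓡 ∗ 𝓡[1]` is two-term maximal `𝓡[1]`-rigid: it is `𝓡[1]`-rigid and for every
`M ∈ 𝓡 ∗ 𝓡[1]`, `[𝓡[1]](𝓧 ∨ add M, (𝓧 ∨ add M)[1]) = 0` implies `M ∈ 𝓧`. -/
def IsTwoTermMaxRelRigid (𝓡 𝓧 : Set C) : Prop :=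
  𝓧 ⊆ twoTerm 𝓡 ∧ IsRelRigid 𝓡 𝓧 ∧
  ∀ M ∈ twoTerm 𝓡, IsRelRigid 𝓡 (veeAdd 𝓧 M) → M ∈ 𝓧

/-- `𝓧 ⊆ 𝓡 ∗ 𝓡[1]` is two-term weak `𝓡[1]`-cluster tilting: `𝓡 ⊆ 𝓧[-1] ∗ 𝓧` and
`𝓧 = {M ∈ 𝓡 ∗ 𝓡[1] : [𝓡[1]](M, 𝓧[1]) = 0 and [𝓡[1]](𝓧, M[1]) = 0}`. -/
def IsTwoTermWeakRelCT (𝓡 𝓧 : Set C) : Prop :=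
  𝓧 ⊆ twoTerm 𝓡 ∧
  (∀ R ∈ 𝓡, R ∈ starSet (shiftSet 𝓧 (-1)) 𝓧) ∧
  (∀ M : C, M ∈ 𝓧 ↔ M ∈ twoTerm 𝓡 ∧ relOrthTo 𝓡 𝓧 M ∧ relOrthFrom 𝓡 𝓧 M)

/-- `𝓧 ⊆ 𝓡 ∗ 𝓡[1]` is two-term `𝓡[1]`-cluster tilting: `𝓧` is contravariantly finite and
`𝓧 = {M ∈ 𝓡 ∗ 𝓡[1] : [𝓡[1]](M, 𝓧[1]) = 0 and [𝓡[1]](𝓧, M[1]) = 0}`. -/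
def IsTwoTermRelCT (𝓡 𝓧 : Set C) : Prop :=
  𝓧 ⊆ twoTerm 𝓡 ∧ ContravariantlyFinite 𝓧 ∧
  (∀ M : C, M ∈ 𝓧 ↔ M ∈ twoTerm 𝓡 ∧ relOrthTo 𝓡 𝓧 M ∧ relOrthFrom 𝓡 𝓧 M)

/-- `C` is 2-Calabi–Yau over `k`: there is a bifunctorial isomorphism
`Hom(X, Y) ≅ D Hom(Y, X⟦2⟧)`, where `D = Hom_k(-, k)`. -/
def IsTwoCalabiYau (k : Type*) [Field k] [Linear k C] : Prop :=
  ∃ η : ∀ (X Y : C), (X ⟶ Y) ≃ₗ[k] Module.Dual k (Y ⟶ X⟦(2:ℤ)⟧),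
    ∀ ⦃X X' Y Y' : C⦄ (f : X' ⟶ X) (g : Y ⟶ Y') (φ : X ⟶ Y) (ψ : Y' ⟶ X'⟦(2:ℤ)⟧),
      η X' Y' (f ≫ φ ≫ g) ψ = η X Y φ (g ≫ ψ ≫ f⟦(2:ℤ)⟧')

/-- `𝓡` is maximal rigid: rigid, and `Hom(A, B[1]) = 0` for all
`A, B ∈ 𝓡 ∨ add M` implies `M ∈ 𝓡`. -/
def IsMaxRigidSubcat (𝓡 : Set C) : Prop :=
  IsRigidSubcat 𝓡 ∧
  ∀ M : C, (∀ A ∈ veeAdd 𝓡 M, ∀ B ∈ veeAdd 𝓡 M, ∀ φ : A ⟶ B⟦(1:ℤ)⟧, φ = 0) → M ∈ 𝓡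

/-- A functorially finite subcategory `𝓡` is cluster tilting if
`𝓡 = {M : Hom(𝓡, M[1]) = 0} = {M : Hom(M, 𝓡[1]) = 0}`. -/
def IsClusterTilting (𝓡 : Set C) : Prop :=
  FunctoriallyFinite 𝓡 ∧
  (∀ M : C, M ∈ 𝓡 ↔ ∀ R ∈ 𝓡, ∀ φ : R ⟶ M⟦(1:ℤ)⟧, φ = 0) ∧
  (∀ M : C, M ∈ 𝓡 ↔ ∀ R ∈ 𝓡, ∀ φ : M ⟶ R⟦(1:ℤ)⟧, φ = 0)

/-- `Hom(A, B[1])` vanishes. -/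
def ExtZero (A B : C) : Prop := ∀ φ : A ⟶ B⟦(1:ℤ)⟧, φ = 0

/-- `U` sits in a triangle `R → U → X → R[1]` with last map a right `𝓧`-approximation. -/
def Bong (𝓡 𝓧 : Set C) (U : C) : Prop :=
  ∃ R ∈ 𝓡, ∃ X ∈ 𝓧, ∃ (i : R ⟶ U) (p : U ⟶ X) (h : X ⟶ R⟦(1:ℤ)⟧),
    Triangle.mk i p h ∈ distTriang C ∧ IsRightApprox 𝓧 h

theorem ExtZero.swap {k : Type*} [Field k] [Linear k C]
    (h2CY : IsTwoCalabiYau (C := C) k) {A B : C} (h : ExtZero A B) : ExtZero B A := by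
  obtain ⟨η, -⟩ := h2CY
  intro φ
  apply (η B (A⟦(1:ℤ)⟧)).injective
  rw [map_zero]
  ext ψ
  have hψ : ψ = 0 := by
    let e := (shiftFunctorAdd' C (1:ℤ) 1 2 (by norm_num)).app B
    have h1 : ψ ≫ e.hom = 0 := by
      obtain ⟨χ, hχ⟩ := (shiftFunctor C (1:ℤ)).map_surjective
        (X := A) (Y := B⟦(1:ℤ)⟧) (ψ ≫ e.hom)
      rw [← hχ, h χ, Functor.map_zero]
    rw [← cancel_mono e.hom, h1, zero_comp]
  rw [hψ]
  simp

theorem Bong.ext_left {𝓡 𝓧 : Set C} (hrig : IsRigidSubcat 𝓧) {U : C} (hU : Bong 𝓡 𝓧 U)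
    {X' : C} (hX' : X' ∈ 𝓧) : ExtZero X' U := by
  obtain ⟨R, hR, X, hX, i, p, h, hT, hap⟩ := hU
  intro φ
  obtain ⟨ψ, hψ⟩ := Triangle.coyoneda_exact₃ _ (rot_of_distTriang _ (rot_of_distTriang _ hT))
    (show X' ⟶ _ from φ) (by
      have := hrig X' hX' X hX (φ ≫ p⟦(1:ℤ)⟧')
      change φ ≫ (-(p⟦(1:ℤ)⟧')) = 0
      rw [Preadditive.comp_neg, this, neg_zero])
  change X' ⟶ R⟦(1:ℤ)⟧ at ψ
  obtain ⟨χ, hχ⟩ := hap X' hX' ψ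
  have hz : h ≫ i⟦(1:ℤ)⟧' = 0 := comp_distTriang_mor_zero₃₁ _ hT
  have hψ' : φ = ψ ≫ (-(i⟦(1:ℤ)⟧')) := hψ
  rw [hψ', ← hχ]
  simp [hz]

theorem Bong.ext {k : Type*} [Field k] [Linear k C]
    (h2CY : IsTwoCalabiYau (C := C) k) {𝓡 𝓧 : Set C}
    (hR : IsRigidSubcat 𝓡) (hrig : IsRigidSubcat 𝓧) {U U' : C} (hU : Bong 𝓡 𝓧 U)
    (hU' : Bong 𝓡 𝓧 U') : ExtZero U U' := by
  intro φ
  have hUX : ∀ X' ∈ 𝓧, ExtZero U X' := fun X' hX' => (hU.ext_left hrig hX').swap h2CY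
  obtain ⟨R, hR1, X, hX, i, p, h, hT, hap⟩ := hU
  obtain ⟨R', hR1', X', hX', i', p', h', hT', hap'⟩ := hU'
  obtain ⟨ψ, hψ⟩ := Triangle.coyoneda_exact₃ _ (rot_of_distTriang _ (rot_of_distTriang _ hT'))
    (show U ⟶ _ from φ) (by
      have := hUX X' hX' (φ ≫ p'⟦(1:ℤ)⟧')
      change φ ≫ (-(p'⟦(1:ℤ)⟧')) = 0
      rw [Preadditive.comp_neg, this, neg_zero])
  change U ⟶ R'⟦(1:ℤ)⟧ at ψ
  have hψ' : φ = ψ ≫ (-(i'⟦(1:ℤ)⟧')) := hψ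
  obtain ⟨χ, hχ⟩ := Triangle.yoneda_exact₂ _ hT ψ (hR R hR1 R' hR1' (i ≫ ψ))
  change X ⟶ R'⟦(1:ℤ)⟧ at χ
  have hχ' : ψ = p ≫ χ := hχ
  obtain ⟨ω, hω⟩ := hap' X hX χ
  have hz : h' ≫ i'⟦(1:ℤ)⟧' = 0 := comp_distTriang_mor_zero₃₁ _ hT'
  rw [hψ', hχ', ← hω]
  simp [hz]

/-- If `Hom(𝓧, A[1]) = 0`, there is a map from a Bongartz object to `A` through which every
map from an object `N` with `Hom(N, U[1]) = 0` for all Bongartz objects `U` factors. -/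
theorem exists_bong_approx {𝓡 𝓧 : Set C} (hct : IsClusterTilting 𝓡)
    (hX : ContravariantlyFinite 𝓧) (A : C) (hA : ∀ X ∈ 𝓧, ExtZero X A) :
    ∃ E, Bong 𝓡 𝓧 E ∧ ∃ e : E ⟶ A, ∀ N : C, (∀ U, Bong 𝓡 𝓧 U → ExtZero N U) →
      ∀ g : N ⟶ A, ∃ s : N ⟶ E, s ≫ e = g := by
  obtain ⟨⟨hcon, -⟩, hct1, -⟩ := hct
  obtain ⟨R0, hR0, m, hm⟩ := hcon A
  obtain ⟨R1, r, w, hT⟩ := distinguished_cocone_triangle₁ m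
  have hmw : m ≫ w = 0 := comp_distTriang_mor_zero₂₃ _ hT
  have hwr : w ≫ r⟦(1:ℤ)⟧' = 0 := comp_distTriang_mor_zero₃₁ _ hT
  have hR1 : R1 ∈ 𝓡 := by
    rw [hct1]
    intro R hR φ
    obtain ⟨ψ, hψ⟩ := Triangle.coyoneda_exact₁ _ hT φ
      ((hct1 R0).1 hR0 R hR (φ ≫ r⟦(1:ℤ)⟧'))
    change R ⟶ A at ψ
    obtain ⟨χ, hχ⟩ := hm R hR ψ
    have hψ' : φ = ψ ≫ w := hψ
    rw [hψ', ← hχ, Category.assoc, hmw, comp_zero]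
  have hT2 := rot_of_distTriang _ hT
  obtain ⟨X1, hX1, g1, hg1⟩ := hX (R1⟦(1:ℤ)⟧)
  obtain ⟨U1, i1, p1, hTU⟩ := distinguished_cocone_triangle₂ g1
  have hU1 : Bong 𝓡 𝓧 U1 := ⟨R1, hR1, X1, hX1, i1, p1, g1, hTU, hg1⟩
  obtain ⟨E, i, p, hE⟩ := distinguished_cocone_triangle₂ (g1 ≫ (-(r⟦(1:ℤ)⟧')))
  refine ⟨E, ⟨R0, hR0, X1, hX1, i, p, _, hE, ?_⟩, ?_⟩
  · intro X hXX x
    obtain ⟨y, hy⟩ := Triangle.coyoneda_exact₁ _ hT2 x (hA X hXX (x ≫ m⟦(1:ℤ)⟧'))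
    change X ⟶ R1⟦(1:ℤ)⟧ at y
    have hy' : x = y ≫ (-(r⟦(1:ℤ)⟧')) := hy
    obtain ⟨z, hz⟩ := hg1 X hXX y
    exact ⟨z, by rw [hy', ← hz, Category.assoc]⟩
  · obtain ⟨e, he1, he2⟩ := complete_distinguished_triangle_morphism₂ _ _ hE hT2 (𝟙 R0) g1
      (by
        change (g1 ≫ (-(r⟦(1:ℤ)⟧'))) ≫ (𝟙 R0)⟦(1:ℤ)⟧' = g1 ≫ (-(r⟦(1:ℤ)⟧'))
        rw [CategoryTheory.Functor.map_id, Category.comp_id])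
    change E ⟶ A at e
    have he1' : i ≫ e = m := he1.trans (Category.id_comp m)
    have he2' : p ≫ g1 = e ≫ w := he2
    refine ⟨e, fun N hN g => ?_⟩
    obtain ⟨b, hb⟩ := Triangle.coyoneda_exact₁ _ hTU (g ≫ w)
      (hN U1 hU1 ((g ≫ w) ≫ i1⟦(1:ℤ)⟧'))
    change N ⟶ X1 at b
    have hb' : g ≫ w = b ≫ g1 := hb
    obtain ⟨s, hs⟩ := Triangle.coyoneda_exact₃ _ hE b (by
      change b ≫ g1 ≫ (-(r⟦(1:ℤ)⟧')) = 0
      rw [← Category.assoc, ← hb']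
      simp [hwr])
    change N ⟶ E at s
    have hs' : b = s ≫ p := hs
    obtain ⟨t, ht⟩ := Triangle.coyoneda_exact₂ _ hT2 (g - s ≫ e) (by
      change (g - s ≫ e) ≫ w = 0
      rw [Preadditive.sub_comp, hb', hs', Category.assoc, Category.assoc, he2', sub_self])
    change N ⟶ R0 at t
    have ht' : g - s ≫ e = t ≫ m := ht
    refine ⟨s + t ≫ i, ?_⟩
    rw [Preadditive.add_comp, Category.assoc, he1', ← ht']
    abel

/-- Every object admits a right approximation by the objects left orthogonal to `𝓧[1]`. -/
theorem exists_Z_approx {k : Type*} [Field k] [Linear k C]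
    (h2CY : IsTwoCalabiYau (C := C) k) {𝓧 : Set C}
    (hrig : IsRigidSubcat 𝓧) (hX : CovariantlyFinite 𝓧) (A : C) :
    ∃ Z : C, (∀ X ∈ 𝓧, ExtZero X Z) ∧ ∃ q : Z ⟶ A, ∀ N : C, (∀ X ∈ 𝓧, ExtZero N X) →
      ∀ g : N ⟶ A, ∃ s : N ⟶ Z, s ≫ q = g := by
  obtain ⟨X, hXX, f, hf⟩ := hX (A⟦(-1:ℤ)⟧)
  let e : (A⟦(-1:ℤ)⟧)⟦(1:ℤ)⟧ ≅ A := shiftNegShift A (1:ℤ)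
  let α : A ⟶ X⟦(1:ℤ)⟧ := e.inv ≫ f⟦(1:ℤ)⟧'
  have hα : ∀ X' ∈ 𝓧, ∀ β : A ⟶ X'⟦(1:ℤ)⟧, ∃ γ : X⟦(1:ℤ)⟧ ⟶ X'⟦(1:ℤ)⟧, α ≫ γ = β := by
    intro X' hX' β
    obtain ⟨β', hβ'⟩ := (shiftFunctor C (1:ℤ)).map_surjective
      (X := A⟦(-1:ℤ)⟧) (Y := X') (e.hom ≫ β)
    obtain ⟨h, hh⟩ := hf X' hX' β'
    refine ⟨h⟦(1:ℤ)⟧', ?_⟩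
    simp only [α, Category.assoc]
    rw [← Functor.map_comp, hh, hβ', Iso.inv_hom_id_assoc]
  obtain ⟨Z, j, q, hT⟩ := distinguished_cocone_triangle₂ α
  have hqα : q ≫ α = 0 := comp_distTriang_mor_zero₂₃ _ hT
  refine ⟨Z, fun X' hX' => ExtZero.swap h2CY ?_, q, fun N hN g => ?_⟩
  · intro φ
    obtain ⟨ψ, hψ⟩ := Triangle.yoneda_exact₂ _ hT φ (hrig X hXX X' hX' (j ≫ φ))
    change A ⟶ X'⟦(1:ℤ)⟧ at ψ
    have hψ' : φ = q ≫ ψ := hψ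
    obtain ⟨γ, hγ⟩ := hα X' hX' ψ
    rw [hψ', ← hγ, ← Category.assoc, hqα, zero_comp]
  · obtain ⟨s, hs⟩ := Triangle.coyoneda_exact₃ _ hT g (hN X hXX (g ≫ α))
    exact ⟨s, hs.symm⟩

theorem ExtZero.retract_left {A A' B : C} (h : ExtZero A B) (hr : IsRetractOf A' A) :
    ExtZero A' B := by
  obtain ⟨s, r, hsr⟩ := hr
  intro φ
  rw [← Category.id_comp φ, ← hsr, Category.assoc, h (r ≫ φ), comp_zero]

theorem ExtZero.retract_right {A B B' : C} (h : ExtZero A B) (hr : IsRetractOf B' B) :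
    ExtZero A B' := by
  obtain ⟨s, r, hsr⟩ := hr
  intro φ
  have : φ = (φ ≫ s⟦(1:ℤ)⟧') ≫ r⟦(1:ℤ)⟧' := by
    rw [Category.assoc, ← Functor.map_comp, hsr, CategoryTheory.Functor.map_id, Category.comp_id]
  rw [this, h (φ ≫ s⟦(1:ℤ)⟧'), zero_comp]

/-- A subcategory defined by an orthogonality condition is a subcategory. -/
theorem isSubcat_of_orth {𝓨 : Set C} (h : ∀ M, M ∈ 𝓨 ↔ ∀ N ∈ 𝓨, ExtZero N M) :
    IsSubcat 𝓨 := by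
  refine ⟨fun X Y e hX => ?_, fun F G T hF hG hT => ?_, fun X Y hX hr => ?_⟩
  · exact (h Y).2 fun N hN => ((h X).1 hX N hN).retract_right ⟨e.inv, e.hom, by simp⟩
  · obtain ⟨i, j, p, q, -, -, -, -, hpq⟩ := hT
    refine (h T).2 fun N hN φ => ?_
    have h1 := (h F).1 hF N hN (φ ≫ p⟦(1:ℤ)⟧')
    have h2 := (h G).1 hG N hN (φ ≫ q⟦(1:ℤ)⟧')
    have : φ = (φ ≫ p⟦(1:ℤ)⟧') ≫ i⟦(1:ℤ)⟧' + (φ ≫ q⟦(1:ℤ)⟧') ≫ j⟦(1:ℤ)⟧' := by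
      rw [Category.assoc, Category.assoc, ← Functor.map_comp, ← Functor.map_comp,
        ← Preadditive.comp_add, ← Functor.map_add, hpq, CategoryTheory.Functor.map_id, Category.comp_id]
    rw [this, h1, h2, zero_comp, zero_comp, add_zero]
  · exact (h Y).2 fun N hN => ((h X).1 hX N hN).retract_right hr

/-- Contravariantly finite plus orthogonality gives covariantly finite. -/
theorem covFinite_of_orth {𝓨 : Set C} (h : ∀ M, M ∈ 𝓨 ↔ ∀ N ∈ 𝓨, ExtZero N M)
    (hc : ContravariantlyFinite 𝓨) : CovariantlyFinite 𝓨 := by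
  intro A
  obtain ⟨Y0, hY0, g, hg⟩ := hc (A⟦(1:ℤ)⟧)
  obtain ⟨W, a, b, hT⟩ := distinguished_cocone_triangle₂ g
  have hga : g ≫ a⟦(1:ℤ)⟧' = 0 := comp_distTriang_mor_zero₃₁ _ hT
  refine ⟨W, (h W).2 fun N hN φ => ?_, a, fun Y hY f => ?_⟩
  · obtain ⟨ψ, hψ⟩ := Triangle.coyoneda_exact₃ _
      (rot_of_distTriang _ (rot_of_distTriang _ hT)) (show N ⟶ _ from φ) (by
        have := (h Y0).1 hY0 N hN (φ ≫ b⟦(1:ℤ)⟧')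
        change φ ≫ (-(b⟦(1:ℤ)⟧')) = 0
        rw [Preadditive.comp_neg, this, neg_zero])
    change N ⟶ A⟦(1:ℤ)⟧ at ψ
    have hψ' : φ = ψ ≫ (-(a⟦(1:ℤ)⟧')) := hψ
    obtain ⟨χ, hχ⟩ := hg N hN ψ
    rw [hψ', ← hχ]
    simp [hga]
  · obtain ⟨ψ, hψ⟩ := Triangle.yoneda_exact₂ _ (rot_of_distTriang _ (rot_of_distTriang _ hT))
      (f⟦(1:ℤ)⟧') ((h Y).1 hY Y0 hY0 (g ≫ f⟦(1:ℤ)⟧'))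
    change W⟦(1:ℤ)⟧ ⟶ Y⟦(1:ℤ)⟧ at ψ
    have hψ' : f⟦(1:ℤ)⟧' = (-(a⟦(1:ℤ)⟧')) ≫ ψ := hψ
    obtain ⟨χ, hχ⟩ := (shiftFunctor C (1:ℤ)).map_surjective (X := W) (Y := Y) ψ
    refine ⟨-χ, (shiftFunctor C (1:ℤ)).map_injective ?_⟩
    rw [hψ', ← hχ]
    simp

/-- **Corollary (Statement 7).** Let `C` be a 2-Calabi–Yau triangulated category with a
cluster tilting subcategory `𝓡`, and let `𝓧` be a functorially finite rigid subcategory.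
Then `C` has a cluster tilting subcategory `𝓨` containing `𝓧`. -/
theorem exists_clusterTilting_containing_rigid
    (k : Type*) [Field k] [IsAlgClosed k] [Linear k C]
    [∀ X Y : C, FiniteDimensional k (X ⟶ Y)] [IsIdempotentComplete C]
    (h2CY : IsTwoCalabiYau (C := C) k)
    (𝓡 : Set C) (h𝓡sub : IsSubcat 𝓡) (h𝓡ct : IsClusterTilting 𝓡)
    (𝓧 : Set C) (h𝓧sub : IsSubcat 𝓧) (h𝓧rig : IsRigidSubcat 𝓧)
    (h𝓧ff : FunctoriallyFinite 𝓧) :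
    ∃ 𝓨 : Set C, IsSubcat 𝓨 ∧ IsClusterTilting 𝓨 ∧ 𝓧 ⊆ 𝓨 := by
  have hRrig : IsRigidSubcat 𝓡 := fun R hR R' hR' φ => (h𝓡ct.2.1 R').1 hR' R hR φ
  obtain ⟨hXc, hXcov⟩ := h𝓧ff
  let 𝓨 : Set C := {M | ∃ U, Bong 𝓡 𝓧 U ∧ IsRetractOf M U}
  have hB : ∀ U, Bong 𝓡 𝓧 U → U ∈ 𝓨 := fun U hU => ⟨U, hU, 𝟙 U, 𝟙 U, by simp⟩
  have key : ∀ M : C, (∀ X ∈ 𝓧, ExtZero X M) → (∀ U, Bong 𝓡 𝓧 U → ExtZero U M) → M ∈ 𝓨 := by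
    intro M h1 h2
    obtain ⟨E, hE, e, he⟩ := exists_bong_approx h𝓡ct hXc M h1
    obtain ⟨s, hs⟩ := he M (fun U hU => (h2 U hU).swap h2CY) (𝟙 M)
    exact ⟨E, hE, s, e, hs⟩
  have hXY : 𝓧 ⊆ 𝓨 := fun X hX => key X (fun X' hX' => h𝓧rig X' hX' X hX)
    (fun U hU => (hU.ext_left h𝓧rig hX).swap h2CY)
  have hrig : ∀ M ∈ 𝓨, ∀ N ∈ 𝓨, ExtZero M N := by
    rintro M ⟨U, hU, hM⟩ N ⟨V, hV, hN⟩
    exact ((hU.ext h2CY hRrig h𝓧rig hV).retract_left hM).retract_right hN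
  have horth : ∀ M, M ∈ 𝓨 ↔ ∀ N ∈ 𝓨, ExtZero N M := fun M =>
    ⟨fun hM N hN => hrig N hN M hM,
      fun h => key M (fun X hX => h X (hXY hX)) (fun U hU => h U (hB U hU))⟩
  have hcon : ContravariantlyFinite 𝓨 := by
    intro A
    obtain ⟨Z, hZ, q, hq⟩ := exists_Z_approx h2CY h𝓧rig hXcov A
    obtain ⟨E, hE, e, he⟩ := exists_bong_approx h𝓡ct hXc Z hZ
    refine ⟨E, hB E hE, e ≫ q, fun Y hY g => ?_⟩
    obtain ⟨s, hs⟩ := hq Y (fun X hX => hrig Y hY X (hXY hX)) g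
    obtain ⟨t, ht⟩ := he Y (fun U hU => hrig Y hY U (hB U hU)) s
    exact ⟨t, by rw [← Category.assoc, ht, hs]⟩
  refine ⟨𝓨, isSubcat_of_orth horth, ⟨⟨hcon, covFinite_of_orth horth hcon⟩, horth, fun M => ?_⟩,
    hXY⟩
  rw [horth M]
  exact ⟨fun h N hN => (h N hN).swap h2CY,
    fun h N hN => ExtZero.swap h2CY (fun φ => h N hN φ)⟩
end

section
/- Let R be a presilting subcategory of C and X a subcategory of C contained in R∗R[1]. Then Hom_C(X, X'[i]) = 0 for all X, X' ∈ X and all integers i > 1. -/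
/-!
Setting: `C` is a Hom-finite Krull–Schmidt `k`-linear triangulated category over an
algebraically closed field `k` (Krull–Schmidt is encoded as Hom-finiteness together with
idempotent completeness). Subcategories are identified with their classes of objects and
are always assumed full, closed under isomorphisms, direct sums and direct summands.
-/

open CategoryTheory CategoryTheory.Limits CategoryTheory.Pretriangulated Opposite

universe v u

variable {C : Type u} [Category.{v} C] [Preadditive C] [HasZeroObject C] [HasShift C ℤ]
  [∀ n : ℤ, (shiftFunctor C n).Additive] [Pretriangulated C]

/-- `𝓢` is presilting: `Hom(S, S'⟦i⟧) = 0` for all `S, S' ∈ 𝓢` and `i > 0`. -/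
def IsPresilting (𝓢 : Set C) : Prop :=
  ∀ S ∈ 𝓢, ∀ S' ∈ 𝓢, ∀ i : ℤ, 0 < i → ∀ φ : S ⟶ S'⟦i⟧, φ = 0

/-- A thick subcategory: closed under isomorphisms, shifts, cones and direct summands. -/
def IsThickSubcat (S : Set C) : Prop :=
  (∀ ⦃X Y : C⦄, (X ≅ Y) → X ∈ S → Y ∈ S) ∧
  (∀ X ∈ S, ∀ n : ℤ, X⟦n⟧ ∈ S) ∧
  (∀ T : Triangle C, T ∈ (distTriang C) → T.obj₁ ∈ S → T.obj₂ ∈ S → T.obj₃ ∈ S) ∧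
  (∀ ⦃X Y : C⦄, X ∈ S → IsRetractOf Y X → Y ∈ S)

/-- `thick 𝓢`: the smallest thick subcategory containing `𝓢`. -/
def thickClosure (𝓢 : Set C) : Set C := ⋂₀ {T | IsThickSubcat T ∧ 𝓢 ⊆ T}

/-- `𝓢` is silting: presilting and `thick 𝓢 = C`. -/
def IsSilting (𝓢 : Set C) : Prop := IsPresilting 𝓢 ∧ thickClosure 𝓢 = Set.univ

/-- Maps from `𝓡` to positive shifts of two-term objects vanish. -/
lemma hom_from_R_eq_zero (𝓡 : Set C) (h𝓡 : IsPresilting 𝓡) (R : C) (hR : R ∈ 𝓡)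
    (X : C) (hX : X ∈ twoTerm 𝓡) (i : ℤ) (hi : 0 < i) (φ : R ⟶ X⟦i⟧) : φ = 0 := by
  obtain ⟨A, hA, B, ⟨R', hR', ⟨e⟩⟩, f, g, h, hT⟩ := hX
  have hT' := Triangle.shift_distinguished _ hT i
  have hB : ∀ ψ : R ⟶ B⟦i⟧, ψ = 0 := by
    intro ψ
    let e' : B⟦i⟧ ≅ R'⟦1 + i⟧ :=
      (shiftFunctor C i).mapIso e ≪≫ ((shiftFunctorAdd C 1 i).app R').symm
    have h0 := h𝓡 R hR R' hR' (1 + i) (by omega) (ψ ≫ e'.hom)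
    rw [← cancel_mono e'.hom, h0, zero_comp]
  obtain ⟨ψ, hψ⟩ := Triangle.coyoneda_exact₂ _ hT' φ (hB _)
  have h0 : ψ = 0 := h𝓡 R hR A hA i hi ψ
  rw [hψ, h0, zero_comp]
  rfl

/-- **Lemma (Statement 12).** Let `𝓡` be a presilting subcategory of `C` and
`𝓧 ⊆ 𝓡 ∗ 𝓡[1]` a subcategory. Then `Hom_C(X, X'⟦i⟧) = 0` for all `X, X' ∈ 𝓧` and all
integers `i > 1`. -/
theorem hom_shift_eq_zero_of_twoTerm
    (k : Type*) [Field k] [IsAlgClosed k] [Linear k C]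
    [∀ X Y : C, FiniteDimensional k (X ⟶ Y)] [IsIdempotentComplete C]
    (𝓡 𝓧 : Set C) (h𝓡sub : IsSubcat 𝓡) (h𝓡 : IsPresilting 𝓡)
    (h𝓧sub : IsSubcat 𝓧) (h𝓧tt : 𝓧 ⊆ twoTerm 𝓡) :
    ∀ X ∈ 𝓧, ∀ X' ∈ 𝓧, ∀ i : ℤ, 1 < i → ∀ φ : X ⟶ X'⟦i⟧, φ = 0 := by
  intro X hX X' hX' i hi φ
  obtain ⟨A, hA, B, ⟨R', hR', ⟨e⟩⟩, f, g, h, hT⟩ := h𝓧tt hX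
  obtain ⟨ψ, hψ⟩ := Triangle.yoneda_exact₂ _ hT φ
    (hom_from_R_eq_zero 𝓡 h𝓡 A hA X' (h𝓧tt hX') i (by omega) _)
  change B ⟶ _ at ψ
  have h0 : ψ = 0 := by
    let e' : X'⟦i⟧ ≅ (X'⟦i - 1⟧)⟦(1:ℤ)⟧ :=
      (shiftFunctorAdd' C (i - 1) 1 i (by omega)).app X'
    obtain ⟨θ, hθ⟩ := (shiftFunctor C (1:ℤ)).map_surjective (e.inv ≫ ψ ≫ e'.hom)
    have hθ0 := hom_from_R_eq_zero 𝓡 h𝓡 R' hR' X' (h𝓧tt hX') (i - 1) (by omega) θ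
    rw [hθ0, Functor.map_zero] at hθ
    rw [← cancel_mono e'.hom, ← cancel_epi e.inv, ← hθ]
    simp
  rw [hψ, h0]
  exact comp_zero
end

section
/- Let R be a presilting subcategory of C and X a subcategory of C contained in R∗R[1]. Then the following are equivalent: (a) X is an R[1]-rigid subcategory; (b) X is a rigid subcategory; (c) X is a presilting subcategory. -/
/-!
Setting: `C` is a Hom-finite Krull–Schmidt `k`-linear triangulated category over an
algebraically closed field `k` (Krull–Schmidt is encoded as Hom-finiteness together with
idempotent completeness). Subcategories are identified with their classes of objects and
are always assumed full, closed under isomorphisms, direct sums and direct summands.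
-/

open CategoryTheory CategoryTheory.Limits CategoryTheory.Pretriangulated Opposite

universe v u

variable {C : Type u} [Category.{v} C] [Preadditive C] [HasZeroObject C] [HasShift C ℤ]
  [∀ n : ℤ, (shiftFunctor C n).Additive] [Pretriangulated C]

lemma hom_from_R_zero {𝓡 : Set C} (h𝓡 : IsPresilting 𝓡) {R X : C} (hR : R ∈ 𝓡)
    (hX : X ∈ twoTerm 𝓡) (i : ℤ) (hi : 0 < i) (φ : R ⟶ X⟦i⟧) : φ = 0 := by
  obtain ⟨A, hA, B, ⟨R₁, hR₁, ⟨e⟩⟩, f, g, h, hT⟩ := hX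
  have hT' := Triangle.shift_distinguished _ hT i
  have hB : ∀ ψ : R ⟶ B⟦i⟧, ψ = 0 := by
    intro ψ
    let e' : B⟦i⟧ ≅ R₁⟦1 + i⟧ :=
      (shiftFunctor C i).mapIso e ≪≫ ((shiftFunctorAdd' C 1 i (1 + i) rfl).app R₁).symm
    have h0 : ψ ≫ e'.hom = 0 := h𝓡 R hR R₁ hR₁ (1 + i) (by omega) _
    rw [← cancel_mono e'.hom, h0, zero_comp]
  obtain ⟨g', hg'⟩ := Triangle.coyoneda_exact₂ _ hT' φ (hB _)
  have h0 : g' = 0 := h𝓡 R hR A hA i hi g'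
  rw [hg', h0]
  exact zero_comp

lemma hom_from_shift_zero {R X : C} (i : ℤ)
    (hz : ∀ φ : R ⟶ X⟦i - 1⟧, φ = 0) (ψ : R⟦(1 : ℤ)⟧ ⟶ X⟦i⟧) : ψ = 0 := by
  let e : X⟦i⟧ ≅ (X⟦i - 1⟧)⟦(1 : ℤ)⟧ := (shiftFunctorAdd' C (i - 1) 1 i (by omega)).app X
  obtain ⟨χ, hχ⟩ := (shiftFunctor C (1 : ℤ)).map_surjective (ψ ≫ e.hom)
  rw [← cancel_mono e.hom, ← hχ, hz χ, Functor.map_zero, zero_comp]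

/-- Any map out of a two-term object to a positive shift of a two-term object
factors through an object of `𝓡⟦1⟧`. -/
lemma factors_shift {𝓡 : Set C} (h𝓡 : IsPresilting 𝓡) {X X' : C}
    (hX : X ∈ twoTerm 𝓡) (hX' : X' ∈ twoTerm 𝓡) (i : ℤ) (hi : 0 < i) (φ : X ⟶ X'⟦i⟧) :
    InShiftIdeal 𝓡 φ := by
  obtain ⟨A, hA, B, ⟨R₁, hR₁, ⟨e⟩⟩, f, g, h, hT⟩ := hX
  obtain ⟨b, hb⟩ := Triangle.yoneda_exact₂ _ hT φ (hom_from_R_zero h𝓡 hA hX' i hi _)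
  change B ⟶ X'⟦i⟧ at b
  change φ = g ≫ b at hb
  exact ⟨R₁, hR₁, g ≫ e.hom, e.inv ≫ b, by simpa using hb⟩

/-- **Theorem (Statement 13).** Let `𝓡` be a presilting subcategory of `C` and
`𝓧 ⊆ 𝓡 ∗ 𝓡[1]` a subcategory. Then the following are equivalent:
(a) `𝓧` is `𝓡[1]`-rigid; (b) `𝓧` is rigid; (c) `𝓧` is presilting. -/
theorem relRigid_iff_rigid_iff_presilting
    (k : Type*) [Field k] [IsAlgClosed k] [Linear k C]
    [∀ X Y : C, FiniteDimensional k (X ⟶ Y)] [IsIdempotentComplete C]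
    (𝓡 𝓧 : Set C) (h𝓡sub : IsSubcat 𝓡) (h𝓡 : IsPresilting 𝓡)
    (h𝓧sub : IsSubcat 𝓧) (h𝓧tt : 𝓧 ⊆ twoTerm 𝓡) :
    (IsRelRigid 𝓡 𝓧 ↔ IsRigidSubcat 𝓧) ∧ (IsRigidSubcat 𝓧 ↔ IsPresilting 𝓧) := by
  refine ⟨⟨fun h X hX X' hX' φ => h X hX X' hX' φ
      (factors_shift h𝓡 (h𝓧tt hX) (h𝓧tt hX') 1 (by omega) φ),
      fun h X hX X' hX' φ _ => h X hX X' hX' φ⟩,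
    ⟨fun h X hX X' hX' i hi φ => ?_, fun h X hX X' hX' φ => h X hX X' hX' 1 (by omega) φ⟩⟩
  obtain rfl | hi' : i = 1 ∨ 1 < i := by omega
  · exact h X hX X' hX' φ
  · obtain ⟨R, hR, a, b, rfl⟩ := factors_shift h𝓡 (h𝓧tt hX) (h𝓧tt hX') i hi φ
    rw [hom_from_shift_zero i
      (hom_from_R_zero h𝓡 hR (h𝓧tt hX') (i - 1) (by omega)) b, comp_zero]
end

section
/- Let R be a silting subcategory of C and X a subcategory of C contained in R∗R[1]. Then X is a two-term weak R[1]-cluster tilting subcategory of C if and only if X is a silting subcategory of C. -/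
/-!
Setting: `C` is a Hom-finite Krull–Schmidt `k`-linear triangulated category over an
algebraically closed field `k` (Krull–Schmidt is encoded as Hom-finiteness together with
idempotent completeness). Subcategories are identified with their classes of objects and
are always assumed full, closed under isomorphisms, direct sums and direct summands.
-/

open CategoryTheory CategoryTheory.Limits CategoryTheory.Pretriangulated Opposite

universe v u

variable {C : Type u} [Category.{v} C] [Preadditive C] [HasZeroObject C] [HasShift C ℤ]
  [∀ n : ℤ, (shiftFunctor C n).Additive] [Pretriangulated C]

set_option linter.unusedSectionVars false

namespace SiltAux

/-- `Hom(A, B⟦n⟧) = 0`. -/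
def HZ (A B : C) (n : ℤ) : Prop := ∀ f : A ⟶ B⟦n⟧, f = 0

theorem HZ.of_iso_left {A A' B : C} {n : ℤ} (h : HZ A B n) (e : A' ≅ A) : HZ A' B n := by
  intro f
  have := h (e.inv ≫ f)
  rw [← cancel_epi e.inv, this, comp_zero]

theorem HZ.of_retract_left {A A' B : C} {n : ℤ} (h : HZ A B n) (e : IsRetractOf A' A) :
    HZ A' B n := by
  obtain ⟨s, r, hsr⟩ := e
  intro f
  have := h (r ≫ f)
  rw [← Category.id_comp f, ← hsr, Category.assoc, this, comp_zero]

theorem HZ.of_iso_right {A B B' : C} {n : ℤ} (h : HZ A B n) (e : B' ≅ B) : HZ A B' n := by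
  intro f
  have := h (f ≫ ((shiftFunctor C n).mapIso e).hom)
  rw [← cancel_mono ((shiftFunctor C n).mapIso e).hom, this, zero_comp]

theorem HZ_shift_right {A B : C} {m n p : ℤ} (hp : m + n = p) :
    HZ A (B⟦m⟧) n ↔ HZ A B p := by
  have e := (shiftFunctorAdd' C m n p hp).app B
  constructor
  · intro h f
    have := h (f ≫ e.hom)
    rw [← cancel_mono e.hom, this, zero_comp]
  · intro h f
    have := h (f ≫ e.inv)
    rw [← cancel_mono e.inv, zero_comp]
    exact this

theorem HZ_shift_left {A B : C} {m n p : ℤ} (hp : p + m = n) :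
    HZ (A⟦m⟧) B n ↔ HZ A B p := by
  have e := (shiftFunctorAdd' C p m n hp).app B
  constructor
  · intro h f
    have := h (f⟦m⟧' ≫ e.inv)
    have h2 : f⟦m⟧' = 0 := by
      rw [← cancel_mono e.inv, zero_comp]
      exact this
    exact (shiftFunctor C m).map_injective (by rw [h2, Functor.map_zero])
  · intro h f
    obtain ⟨g, hg⟩ := (shiftFunctor C m).map_surjective (f ≫ e.hom)
    rw [h g, Functor.map_zero] at hg
    rw [← cancel_mono e.hom, ← hg, zero_comp]

section tri
variable {X₁ X₂ X₃ : C} {f : X₁ ⟶ X₂} {g : X₂ ⟶ X₃} {h : X₃ ⟶ X₁⟦(1 : ℤ)⟧}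

theorem shift_exact₂ (hT : Triangle.mk f g h ∈ distTriang C) {A : C} (n : ℤ)
    (φ : A ⟶ X₂⟦n⟧) (hφ : φ ≫ g⟦n⟧' = 0) : ∃ ψ : A ⟶ X₁⟦n⟧, φ = ψ ≫ f⟦n⟧' := by
  have := Triangle.shift_distinguished _ hT n
  have hex : ∃ ψ : A ⟶ X₁⟦n⟧, φ = ψ ≫ (n.negOnePow • f⟦n⟧') :=
    Triangle.coyoneda_exact₂ _ this φ (by
      change φ ≫ (n.negOnePow • g⟦n⟧') = 0
      rw [Linear.comp_units_smul, hφ, smul_zero])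
  obtain ⟨ψ, hψ⟩ := hex
  refine ⟨n.negOnePow • ψ, ?_⟩
  rw [Linear.units_smul_comp, hψ, Linear.comp_units_smul]

theorem HZ.mid_right (hT : Triangle.mk f g h ∈ distTriang C) {A : C} {n : ℤ}
    (h1 : HZ A X₁ n) (h3 : HZ A X₃ n) : HZ A X₂ n := by
  intro φ
  obtain ⟨ψ, rfl⟩ := shift_exact₂ hT n φ (h3 _)
  rw [h1 ψ, zero_comp]

theorem HZ.third_right' (hT : Triangle.mk f g h ∈ distTriang C) {A : C} {n : ℤ}
    (h1 : HZ A X₁ (n + 1)) (h2 : ∀ φ : A ⟶ X₂⟦n⟧, φ ≫ g⟦n⟧' = 0) : HZ A X₃ n := by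
  intro φ
  have h1' : HZ A (X₁⟦(1 : ℤ)⟧) n := (HZ_shift_right (by ring)).2 h1
  have hr := rot_of_distTriang _ hT
  obtain ⟨ψ, rfl⟩ := shift_exact₂ (f := g) (g := h) (h := -f⟦(1 : ℤ)⟧') hr n φ (h1' _)
  exact h2 ψ

theorem HZ.third_right (hT : Triangle.mk f g h ∈ distTriang C) {A : C} {n : ℤ}
    (h1 : HZ A X₁ (n + 1)) (h2 : HZ A X₂ n) : HZ A X₃ n :=
  HZ.third_right' hT h1 (fun φ => by rw [h2 φ, zero_comp])

theorem HZ.mid_left (hT : Triangle.mk f g h ∈ distTriang C) {B : C} {n : ℤ}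
    (h1 : HZ X₁ B n) (h3 : HZ X₃ B n) : HZ X₂ B n := by
  intro φ
  have hex : ∃ ψ : X₃ ⟶ B⟦n⟧, φ = g ≫ ψ := Triangle.yoneda_exact₂ _ hT φ (h1 _)
  obtain ⟨ψ, rfl⟩ := hex
  rw [h3 ψ, comp_zero]

theorem HZ.third_left (hT : Triangle.mk f g h ∈ distTriang C) {B : C} {n : ℤ}
    (h1 : HZ X₁ B (n - 1)) (h2 : HZ X₂ B n) : HZ X₃ B n := by
  intro φ
  have hex : ∃ ψ : X₁⟦(1 : ℤ)⟧ ⟶ B⟦n⟧, φ = h ≫ ψ := Triangle.yoneda_exact₃ _ hT φ (h2 _)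
  obtain ⟨ψ, rfl⟩ := hex
  have h1' : HZ (X₁⟦(1 : ℤ)⟧) B n := (HZ_shift_left (by ring)).2 h1
  rw [h1' ψ, comp_zero]
end tri

/-! ### Thick closures -/

theorem thick_isThick (S : Set C) : IsThickSubcat (thickClosure S) := by
  refine ⟨?_, ?_, ?_, ?_⟩
  · intro X Y e hX T hT
    exact hT.1.1 e (hX T hT)
  · intro X hX n T hT
    exact hT.1.2.1 X (hX T hT) n
  · intro t ht h1 h2 T hT
    exact hT.1.2.2.1 t ht (h1 T hT) (h2 T hT)
  · intro X Y hX hY T hT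
    exact hT.1.2.2.2 (hX T hT) hY

theorem subset_thick (S : Set C) : S ⊆ thickClosure S := fun _ hX _ hT => hT.2 hX

theorem thick_le {S T : Set C} (hT : IsThickSubcat T) (h : S ⊆ T) : thickClosure S ⊆ T :=
  fun _ hX => hX T ⟨hT, h⟩

theorem IsThick.mid {T : Set C} (hT : IsThickSubcat T) {X₁ X₂ X₃ : C} {f : X₁ ⟶ X₂}
    {g : X₂ ⟶ X₃} {h : X₃ ⟶ X₁⟦(1 : ℤ)⟧} (hd : Triangle.mk f g h ∈ distTriang C)
    (h1 : X₁ ∈ T) (h3 : X₃ ∈ T) : X₂ ∈ T := by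
  have := inv_rot_of_distTriang _ hd
  exact hT.2.2.1 _ this (hT.2.1 _ h3 (-1)) h1

theorem IsThick.biprod {T : Set C} (hT : IsThickSubcat T) {X Y : C} (hX : X ∈ T) (hY : Y ∈ T) :
    (X ⊞ Y) ∈ T :=
  IsThick.mid hT (binaryBiproductTriangle_distinguished X Y) hX hY

theorem isDirectSumOf_biprod (X Y : C) : IsDirectSumOf (X ⊞ Y) X Y :=
  ⟨biprod.inl, biprod.inr, biprod.fst, biprod.snd, by simp, by simp, by simp, by simp, by simp⟩

theorem exists_generator {S : Set C} (hS : IsSubcat S) {M : C} (hM : M ∈ thickClosure S) :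
    ∃ E ∈ S, M ∈ thickClosure {E} := by
  refine thick_le (T := {M | ∃ E ∈ S, M ∈ thickClosure {E}}) ⟨?_, ?_, ?_, ?_⟩ ?_ hM
  · rintro X Y e ⟨E, hE, h⟩
    exact ⟨E, hE, (thick_isThick _).1 e h⟩
  · rintro X ⟨E, hE, h⟩ n
    exact ⟨E, hE, (thick_isThick _).2.1 _ h n⟩
  · rintro t ht ⟨E, hE, h⟩ ⟨F, hF, h'⟩
    refine ⟨E ⊞ F, hS.2.1 hE hF (isDirectSumOf_biprod E F), ?_⟩
    have hEF := thick_isThick ({E ⊞ F} : Set C)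
    have h0 : (E ⊞ F) ∈ thickClosure ({E ⊞ F} : Set C) := subset_thick _ rfl
    refine hEF.2.2.1 t ht (thick_le hEF ?_ h) (thick_le hEF ?_ h')
    · rintro _ rfl
      exact hEF.2.2.2 h0 ⟨biprod.inl, biprod.fst, by simp⟩
    · rintro _ rfl
      exact hEF.2.2.2 h0 ⟨biprod.inr, biprod.snd, by simp⟩
  · rintro X Y ⟨E, hE, h⟩ hY
    exact ⟨E, hE, (thick_isThick _).2.2.2 h hY⟩
  · intro X hX
    exact ⟨X, hX, subset_thick _ rfl⟩

theorem exists_bound {E M : C} (hM : M ∈ thickClosure {E}) :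
    ∃ b : ℤ, ∀ (N : C) (n : ℤ), (∀ i, n - b ≤ i → HZ E N i) → HZ M N n := by
  refine thick_le (T := {M | ∃ b : ℤ, ∀ (N : C) (n : ℤ),
    (∀ i, n - b ≤ i → HZ E N i) → HZ M N n}) ⟨?_, ?_, ?_, ?_⟩ ?_ hM
  · rintro X Y e ⟨b, hb⟩
    exact ⟨b, fun N n h => (hb N n h).of_iso_left e.symm⟩
  · rintro X ⟨b, hb⟩ m
    refine ⟨b + m, fun N n h => ?_⟩
    rw [HZ_shift_left (p := n - m) (by ring)]
    exact hb N _ (fun i hi => h i (by linarith))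
  · rintro ⟨X₁, X₂, X₃, f, g, h⟩ ht ⟨b, hb⟩ ⟨b', hb'⟩
    refine ⟨max (b + 1) b', fun N n hN => ?_⟩
    refine HZ.third_left ht (hb N _ fun i hi => hN i ?_) (hb' N _ fun i hi => hN i ?_)
    · have := le_max_left (b + 1) b'
      linarith
    · have := le_max_right (b + 1) b'
      linarith
  · rintro X Y ⟨b, hb⟩ e
    exact ⟨b, fun N n h => (hb N n h).of_retract_left e⟩
  · rintro _ rfl
    exact ⟨0, fun N n h => h n (by simp)⟩

/-! ### Approximations -/

/-- `E'` is built from `E` by finite direct sums. -/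
def FinSum (E E' : C) : Prop :=
  ∀ S : Set C, (∀ A ∈ S, ∀ B ∈ S, (A ⊞ B) ∈ S) → E ∈ S → E' ∈ S

theorem FinSum.mem {E E' : C} (h : FinSum E E') {S : Set C} (hS : IsSubcat S) (hE : E ∈ S) :
    E' ∈ S := h S (fun A hA B hB => hS.2.1 hA hB (isDirectSumOf_biprod A B)) hE

theorem FinSum.mem_thick {E E' : C} (h : FinSum E E') : E' ∈ thickClosure {E} :=
  h _ (fun _ hA _ hB => IsThick.biprod (thick_isThick _) hA hB) (subset_thick _ rfl)

theorem FinSum.HZ {E E' : C} (h : FinSum E E') {T : C} {n : ℤ} (hT : HZ T E n) : HZ T E' n :=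
  h {A | SiltAux.HZ T A n} (fun A hA B hB =>
    HZ.mid_right (binaryBiproductTriangle_distinguished A B) hA hB) hT

theorem exists_right_approx (k : Type*) [Field k] [Linear k C]
    [∀ X Y : C, FiniteDimensional k (X ⟶ Y)] (E N : C) :
    ∃ (E' : C) (p : E' ⟶ N), FinSum E E' ∧ ∀ f : E ⟶ N, ∃ h : E ⟶ E', h ≫ p = f := by
  have key : ∀ (S : Submodule k (E ⟶ N)), S.FG →
      ∃ (E' : C) (p : E' ⟶ N), FinSum E E' ∧ ∀ f ∈ S, ∃ h : E ⟶ E', h ≫ p = f := by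
    intro S hS
    induction S, hS using Submodule.fg_induction with
    | singleton x =>
      refine ⟨E, x, fun _ _ h => h, fun f hf => ?_⟩
      obtain ⟨c, rfl⟩ := Submodule.mem_span_singleton.1 hf
      exact ⟨c • 𝟙 E, by simp⟩
    | sup N₁ N₂ hN₁ hN₂ h₁ h₂ =>
      obtain ⟨E₁, p₁, hE₁, hp₁⟩ := h₁
      obtain ⟨E₂, p₂, hE₂, hp₂⟩ := h₂
      refine ⟨E₁ ⊞ E₂, biprod.desc p₁ p₂, fun S hS hE => hS _ (hE₁ S hS hE) _ (hE₂ S hS hE),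
        fun f hf => ?_⟩
      obtain ⟨a, ha, b, hb, rfl⟩ := Submodule.mem_sup.1 hf
      obtain ⟨u, rfl⟩ := hp₁ a ha
      obtain ⟨v, rfl⟩ := hp₂ b hb
      exact ⟨biprod.lift u v, by simp⟩
  obtain ⟨E', p, h, h'⟩ := key ⊤ Module.Finite.fg_top
  exact ⟨E', p, h, fun f => h' f trivial⟩

theorem exists_left_approx (k : Type*) [Field k] [Linear k C]
    [∀ X Y : C, FiniteDimensional k (X ⟶ Y)] (E N : C) :
    ∃ (E' : C) (p : N ⟶ E'), FinSum E E' ∧ ∀ f : N ⟶ E, ∃ h : E' ⟶ E, p ≫ h = f := by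
  have key : ∀ (S : Submodule k (N ⟶ E)), S.FG →
      ∃ (E' : C) (p : N ⟶ E'), FinSum E E' ∧ ∀ f ∈ S, ∃ h : E' ⟶ E, p ≫ h = f := by
    intro S hS
    induction S, hS using Submodule.fg_induction with
    | singleton x =>
      refine ⟨E, x, fun _ _ h => h, fun f hf => ?_⟩
      obtain ⟨c, rfl⟩ := Submodule.mem_span_singleton.1 hf
      exact ⟨c • 𝟙 E, by simp⟩
    | sup N₁ N₂ hN₁ hN₂ h₁ h₂ =>
      obtain ⟨E₁, p₁, hE₁, hp₁⟩ := h₁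
      obtain ⟨E₂, p₂, hE₂, hp₂⟩ := h₂
      refine ⟨E₁ ⊞ E₂, biprod.lift p₁ p₂, fun S hS hE => hS _ (hE₁ S hS hE) _ (hE₂ S hS hE),
        fun f hf => ?_⟩
      obtain ⟨a, ha, b, hb, rfl⟩ := Submodule.mem_sup.1 hf
      obtain ⟨u, rfl⟩ := hp₁ a ha
      obtain ⟨v, rfl⟩ := hp₂ b hb
      exact ⟨biprod.desc u v, by simp⟩
  obtain ⟨E', p, h, h'⟩ := key ⊤ Module.Finite.fg_top
  exact ⟨E', p, h, fun f => h' f trivial⟩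

/-- One step of the tower. -/
theorem tower_step (k : Type*) [Field k] [Linear k C]
    [∀ X Y : C, FiniteDimensional k (X ⟶ Y)] {E P : C} (hE : ∀ i, 0 < i → HZ E E i)
    (hP : ∀ i, 0 < i → HZ E P i) :
    ∃ (E' Q : C) (f : E' ⟶ P) (g : P ⟶ Q) (h : Q ⟶ E'⟦(1 : ℤ)⟧), FinSum E E' ∧
      Triangle.mk f g h ∈ distTriang C ∧ ∀ i, 0 ≤ i → HZ E Q i := by
  obtain ⟨E', p, hE', hp⟩ := exists_right_approx k E P
  obtain ⟨Q, g, h, hT⟩ := distinguished_cocone_triangle p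
  refine ⟨E', Q, p, g, h, hE', hT, fun i hi => ?_⟩
  refine HZ.third_right' hT (hE'.HZ (hE _ (by linarith))) fun φ => ?_
  rcases hi.eq_or_lt with rfl | hi
  · have e := (shiftFunctorZero C ℤ)
    obtain ⟨u, hu⟩ := hp (φ ≫ e.hom.app P)
    have h1 : p ≫ g = 0 := comp_distTriang_mor_zero₁₂ _ hT
    rw [← cancel_mono (e.hom.app Q), zero_comp, Category.assoc, e.hom.naturality,
      ← Category.assoc, ← hu]
    simp [h1]
  · rw [hP i hi φ, zero_comp]

theorem orthogonal (k : Type*) [Field k] [Linear k C]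
    [∀ X Y : C, FiniteDimensional k (X ⟶ Y)] {E N T : C} (hE : ∀ i, 0 < i → HZ E E i)
    (hN : ∀ i, 0 ≤ i → HZ E N i) (hNE : N ∈ thickClosure {E})
    (hT : ∀ i, 0 < i → HZ T E i) (φ : T ⟶ N) : φ = 0 := by
  have tower : ∀ n : ℕ, ∃ (P : C) (g : N ⟶ P⟦(n + 1 : ℤ)⟧), (∀ i, 0 < i → HZ E P i) ∧
      ∀ φ : T ⟶ N, φ ≫ g = 0 → φ = 0 := by
    intro n
    induction n with
    | zero =>
      have e := (shiftFunctorCompIsoId C (-1 : ℤ) ((0 : ℕ) + 1 : ℤ) (by simp)).app N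
      refine ⟨N⟦(-1 : ℤ)⟧, e.inv, fun i hi => ?_, fun φ hφ => ?_⟩
      · rw [HZ_shift_right (p := i - 1) (by ring)]
        exact hN _ (by linarith)
      · rw [← cancel_mono e.inv, zero_comp]
        exact hφ
    | succ n ih =>
      obtain ⟨P, g, hP, hg⟩ := ih
      obtain ⟨E', Q, a, b, c, hE', hd, hQ⟩ := tower_step k hE hP
      have e := (shiftFunctorAdd' C (-1 : ℤ) ((n + 1 : ℕ) + 1 : ℤ) (n + 1 : ℤ)
        (by push_cast; ring)).app Q
      refine ⟨Q⟦(-1 : ℤ)⟧, g ≫ b⟦(n + 1 : ℤ)⟧' ≫ e.hom, fun i hi => ?_, fun φ hφ => ?_⟩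
      · rw [HZ_shift_right (p := i - 1) (by ring)]
        exact hQ _ (by linarith)
      · apply hg
        have h0 : (φ ≫ g) ≫ b⟦(n + 1 : ℤ)⟧' = 0 := by
          rw [← cancel_mono e.hom, zero_comp]
          simpa using hφ
        obtain ⟨ψ, hψ⟩ := shift_exact₂ hd _ _ h0
        rw [hψ, hE'.HZ (hT (n + 1 : ℤ) (by positivity)) ψ, zero_comp]
  obtain ⟨b, hb⟩ := exists_bound hNE
  obtain ⟨P, g, hP, hg⟩ := tower b.toNat
  apply hg
  rw [hb P _ (fun i hi => hP i (by have := Int.self_le_toNat b; linarith)) g, comp_zero]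

theorem mem_of_orthogonal (k : Type*) [Field k] [Linear k C]
    [∀ X Y : C, FiniteDimensional k (X ⟶ Y)] {S : Set C} (hS : IsSubcat S) {E M : C}
    (hES : E ∈ S) (hE : ∀ i, 0 < i → HZ E E i) (hM : M ∈ thickClosure {E})
    (h1 : ∀ i, 0 < i → HZ E M i) (h2 : ∀ i, 0 < i → HZ M E i) : M ∈ S := by
  obtain ⟨E', N, f, g, h, hE', hd, hN⟩ := tower_step k hE h1
  have hNE : N ∈ thickClosure {E} := (thick_isThick _).2.2.1 _ hd hE'.mem_thick hM
  have hg : g = 0 := orthogonal k hE hN hNE h2 g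
  obtain ⟨s, hs⟩ := Triangle.coyoneda_exact₂ _ hd (𝟙 M) (by
    change 𝟙 M ≫ g = 0
    rw [hg, comp_zero])
  exact hS.2.2 (hE'.mem hS hES) ⟨s, f, hs.symm⟩

/-! ### Two-term objects -/

theorem HZ_twoTerm_right {R : Set C} (hR : IsPresilting R) {A M : C} (hA : A ∈ R)
    (hM : M ∈ twoTerm R) {i : ℤ} (hi : 0 < i) : HZ A M i := by
  obtain ⟨R₀, hR₀, B, ⟨R₁, hR₁, ⟨e⟩⟩, f, g, h, hd⟩ := hM
  refine HZ.mid_right hd (hR A hA R₀ hR₀ i hi) (HZ.of_iso_right ?_ e)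
  rw [HZ_shift_right rfl]
  exact hR A hA R₁ hR₁ _ (by linarith)

theorem HZ_twoTerm_left {R : Set C} {N M : C} {i : ℤ} (hN : ∀ A ∈ R, HZ A N i)
    (hN' : ∀ A ∈ R, HZ A N (i - 1)) (hM : M ∈ twoTerm R) : HZ M N i := by
  obtain ⟨R₀, hR₀, B, ⟨R₁, hR₁, ⟨e⟩⟩, f, g, h, hd⟩ := hM
  refine HZ.mid_left hd (hN _ hR₀) (HZ.of_iso_left ?_ e)
  rw [HZ_shift_left (p := i - 1) (by ring)]
  exact hN' _ hR₁

theorem inShiftIdeal {R : Set C} (hR : IsPresilting R) {M N : C} (hM : M ∈ twoTerm R)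
    (hN : N ∈ twoTerm R) (φ : M ⟶ N⟦(1 : ℤ)⟧) : InShiftIdeal R φ := by
  obtain ⟨R₀, hR₀, B, ⟨R₁, hR₁, ⟨e⟩⟩, f, g, h, hd⟩ := hM
  have hex : ∃ ψ : B ⟶ N⟦(1 : ℤ)⟧, φ = g ≫ ψ := Triangle.yoneda_exact₂ _ hd φ
    (HZ_twoTerm_right hR hR₀ hN one_pos _)
  obtain ⟨ψ, hψ⟩ := hex
  exact ⟨R₁, hR₁, g ≫ e.hom, e.inv ≫ ψ, by simpa using hψ⟩

theorem HZ_twoTerm_of_orth {R : Set C} (hR : IsPresilting R) {M N : C} (hM : M ∈ twoTerm R)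
    (hN : N ∈ twoTerm R) (h : ∀ φ : M ⟶ N⟦(1 : ℤ)⟧, InShiftIdeal R φ → φ = 0) (i : ℤ)
    (hi : 0 < i) : HZ M N i := by
  obtain rfl | hi' : i = 1 ∨ 1 < i := by omega
  · intro φ
    exact h φ (inShiftIdeal hR hM hN φ)
  · exact HZ_twoTerm_left (fun A hA => HZ_twoTerm_right hR hA hN hi)
      (fun A hA => HZ_twoTerm_right hR hA hN (by linarith)) hM

theorem mem_star (k : Type*) [Field k] [Linear k C]
    [∀ X Y : C, FiniteDimensional k (X ⟶ Y)] {R S : Set C} (hR : IsPresilting R)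
    (hS : IsSubcat S) (hSs : IsSilting S) (hSR : S ⊆ twoTerm R) {A : C} (hA : A ∈ R) :
    A ∈ starSet (shiftSet S (-1)) S := by
  obtain ⟨E, hE, hAE⟩ := exists_generator hS (M := A) (by rw [hSs.2]; trivial)
  obtain ⟨E', p, hE', hp⟩ := exists_left_approx k E A
  obtain ⟨Y, g, h, hd⟩ := distinguished_cocone_triangle p
  have hEE : ∀ i, 0 < i → HZ E E i := fun i hi => hSs.1 E hE E hE i hi
  have hE'S := hE'.mem hS hE
  have hY : Y ∈ S := by
    refine mem_of_orthogonal k hS hE hEE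
      ((thick_isThick _).2.2.1 _ hd hAE hE'.mem_thick) (fun i hi => ?_) (fun i hi => ?_)
    · refine HZ.third_right hd ?_ (hSs.1 E hE E' hE'S i hi)
      exact HZ_twoTerm_left (fun B hB => hR B hB A hA _ (by linarith))
        (fun B hB => hR B hB A hA _ (by linarith)) (hSR hE)
    · obtain rfl | hi' : i = 1 ∨ 1 < i := by omega
      · intro φ
        obtain ⟨ψ, rfl⟩ := Triangle.yoneda_exact₃ _ hd φ (hSs.1 E' hE'S E hE 1 one_pos _)
        obtain ⟨χ, rfl⟩ := (shiftFunctor C (1 : ℤ)).map_surjective ψ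
        obtain ⟨u, rfl⟩ := hp χ
        have h0 : h ≫ p⟦(1 : ℤ)⟧' = 0 := comp_distTriang_mor_zero₃₁ _ hd
        change h ≫ (p ≫ u)⟦(1 : ℤ)⟧' = 0
        rw [Functor.map_comp, ← Category.assoc, h0, zero_comp]
      · exact HZ.third_left hd (HZ_twoTerm_right hR hA (hSR hE) (by linarith))
          (hSs.1 E' hE'S E hE i hi)
  exact ⟨Y⟦(-1 : ℤ)⟧, ⟨Y, hY, ⟨Iso.refl _⟩⟩, E', hE'S, _, _, _, inv_rot_of_distTriang _ hd⟩

end SiltAux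

/-- **Theorem (Statement 14).** Let `𝓡` be a silting subcategory of `C` and
`𝓧 ⊆ 𝓡 ∗ 𝓡[1]` a subcategory. Then `𝓧` is a two-term weak `𝓡[1]`-cluster tilting
subcategory of `C` if and only if `𝓧` is a silting subcategory of `C`. -/
theorem twoTermWeakRelCT_iff_silting
    (k : Type*) [Field k] [IsAlgClosed k] [Linear k C]
    [∀ X Y : C, FiniteDimensional k (X ⟶ Y)] [IsIdempotentComplete C]
    (𝓡 𝓧 : Set C) (h𝓡sub : IsSubcat 𝓡) (h𝓡 : IsSilting 𝓡)
    (h𝓧sub : IsSubcat 𝓧) (h𝓧tt : 𝓧 ⊆ twoTerm 𝓡) :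
    IsTwoTermWeakRelCT 𝓡 𝓧 ↔ IsSilting 𝓧 := by
  constructor
  · rintro ⟨-, hstar, hchar⟩
    refine ⟨fun X hX X' hX' i hi => ?_, ?_⟩
    · exact SiltAux.HZ_twoTerm_of_orth h𝓡.1 (h𝓧tt hX) (h𝓧tt hX')
        (((hchar X).1 hX).2.1 X' hX') i hi
    · rw [Set.eq_univ_iff_forall]
      intro M
      have hth := SiltAux.thick_isThick 𝓧
      refine SiltAux.thick_le hth ?_ (h𝓡.2 ▸ Set.mem_univ M : M ∈ thickClosure 𝓡)
      intro R hR
      obtain ⟨A, ⟨X, hX, ⟨e⟩⟩, B, hB, f, g, h, hd⟩ := hstar R hR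
      exact SiltAux.IsThick.mid hth hd
        (hth.1 e.symm (hth.2.1 _ (SiltAux.subset_thick _ hX) _)) (SiltAux.subset_thick _ hB)
  · intro hX
    refine ⟨h𝓧tt, fun R hR => SiltAux.mem_star k h𝓡.1 h𝓧sub hX h𝓧tt hR, fun M => ⟨?_, ?_⟩⟩
    · intro hM
      exact ⟨h𝓧tt hM, fun X' hX' φ _ => hX.1 M hM X' hX' 1 one_pos φ,
        fun X' hX' φ _ => hX.1 X' hX' M hM 1 one_pos φ⟩
    · rintro ⟨hM, h1, h2⟩
      obtain ⟨E, hE, hME⟩ := SiltAux.exists_generator h𝓧sub (M := M) (by rw [hX.2]; trivial)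
      exact SiltAux.mem_of_orthogonal k h𝓧sub hE (fun i hi => hX.1 E hE E hE i hi) hME
        (SiltAux.HZ_twoTerm_of_orth h𝓡.1 (h𝓧tt hE) hM (h2 E hE))
        (SiltAux.HZ_twoTerm_of_orth h𝓡.1 hM (h𝓧tt hE) (h1 E hE))
end

section
/- Let R be a rigid subcategory of C, R₀ ∈ R and X ∈ R∗R[1]. If R₀ → X → M → R₀[1] is a triangle in C, then M ∈ R∗R[1]. -/
/-!
Setting: `C` is a Hom-finite Krull–Schmidt `k`-linear triangulated category over an
algebraically closed field `k` (Krull–Schmidt is encoded as Hom-finiteness together with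
idempotent completeness). Subcategories are identified with their classes of objects and
are always assumed full, closed under isomorphisms, direct sums and direct summands.
-/

open CategoryTheory CategoryTheory.Limits CategoryTheory.Pretriangulated Opposite

universe v u

variable {C : Type u} [Category.{v} C] [Preadditive C] [HasZeroObject C] [HasShift C ℤ]
  [∀ n : ℤ, (shiftFunctor C n).Additive] [Pretriangulated C]

/-- `𝓡[1]` is closed under retracts of three-fold direct sums. -/
lemma mem_shiftSet_of_retract (𝓡 : Set C) (hsub : IsSubcat 𝓡) {R₀ B W B' : C}
    (hR₀ : R₀ ∈ 𝓡) (hB : B ∈ 𝓡) (e : B' ≅ B⟦(1:ℤ)⟧)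
    (q t : W ⟶ R₀⟦(1:ℤ)⟧) (u : W ⟶ B') (s r : R₀⟦(1:ℤ)⟧ ⟶ W) (j : B' ⟶ W)
    (hid : 𝟙 W = q ≫ s + u ≫ j + t ≫ r) : W ∈ shiftSet 𝓡 1 := by
  have hid' : 𝟙 W = q ≫ s + (u ≫ e.hom) ≫ (e.inv ≫ j) + t ≫ r := by
    simpa using hid
  have hmem : ∀ F ∈ 𝓡, ∀ G ∈ 𝓡, (F ⊞ G) ∈ 𝓡 := fun F hF G hG =>
    hsub.2.1 hF hG ⟨biprod.inl, biprod.inr, biprod.fst, biprod.snd,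
      by simp, by simp, by simp, by simp, biprod.total⟩
  have hW : W⟦(-1:ℤ)⟧ ∈ 𝓡 := by
    let E : ∀ Y : C, (Y⟦(1:ℤ)⟧)⟦(-1:ℤ)⟧ ≅ Y := fun Y => shiftShiftNeg Y (1:ℤ)
    refine hsub.2.2 (hmem _ (hmem _ hR₀ _ hB) _ hR₀)
      ⟨biprod.lift (biprod.lift (q⟦(-1:ℤ)⟧' ≫ (E _).hom) ((u ≫ e.hom)⟦(-1:ℤ)⟧' ≫ (E _).hom))
          (t⟦(-1:ℤ)⟧' ≫ (E _).hom),
        biprod.desc (biprod.desc ((E _).inv ≫ s⟦(-1:ℤ)⟧') ((E _).inv ≫ (e.inv ≫ j)⟦(-1:ℤ)⟧'))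
          ((E _).inv ≫ r⟦(-1:ℤ)⟧'), ?_⟩
    rw [biprod.lift_desc, biprod.lift_desc]
    simp only [Category.assoc, Iso.hom_inv_id_assoc]
    rw [← CategoryTheory.Functor.map_id, hid']
    simp only [Functor.map_add, Functor.map_comp, Category.assoc]
  exact ⟨_, hW, ⟨(shiftNegShift W (1:ℤ)).symm⟩⟩

/-- **Lemma (Statement 16).** Let `𝓡` be a rigid subcategory of `C`, `R₀ ∈ 𝓡` and
`X ∈ 𝓡 ∗ 𝓡[1]`. If `R₀ → X → M → R₀⟦1⟧` is a triangle in `C`, then `M ∈ 𝓡 ∗ 𝓡[1]`. -/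
theorem cone_mem_twoTerm
    (k : Type*) [Field k] [IsAlgClosed k] [Linear k C]
    [∀ X Y : C, FiniteDimensional k (X ⟶ Y)] [IsIdempotentComplete C]
    (𝓡 : Set C) (h𝓡sub : IsSubcat 𝓡) (h𝓡 : IsRigidSubcat 𝓡)
    (R₀ X M : C) (hR₀ : R₀ ∈ 𝓡) (hX : X ∈ twoTerm 𝓡)
    (a : R₀ ⟶ X) (b : X ⟶ M) (c : M ⟶ R₀⟦(1:ℤ)⟧)
    (htri : Triangle.mk a b c ∈ distTriang C) :
    M ∈ twoTerm 𝓡 := by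
  obtain ⟨A, hA, B', ⟨B, hB, ⟨e⟩⟩, f, g, h, hT⟩ := hX
  have hag : a ≫ g = 0 := by
    have := h𝓡 R₀ hR₀ B hB ((a ≫ g) ≫ e.hom)
    rw [← cancel_mono e.hom, this, zero_comp]
  obtain ⟨a', ha'⟩ : ∃ a' : R₀ ⟶ A, a = a' ≫ f := Triangle.coyoneda_exact₂ _ hT a hag
  have hab : a ≫ b = 0 := comp_distTriang_mor_zero₁₂ _ htri
  obtain ⟨W, w, δ, hW⟩ := distinguished_cocone_triangle (f ≫ b)
  have hwδ : w ≫ δ = 0 := comp_distTriang_mor_zero₂₃ _ hW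
  have hδ : δ ≫ (f ≫ b)⟦(1:ℤ)⟧' = 0 := comp_distTriang_mor_zero₃₁ _ hW
  -- the comparison map `j`
  obtain ⟨j, hj₁, hj₂⟩ : ∃ j : B' ⟶ W, g ≫ j = b ≫ w ∧ h = j ≫ δ := by
    obtain ⟨j, h1, h2⟩ := complete_distinguished_triangle_morphism _ _ hT hW (𝟙 A) b
      (Category.id_comp (f ≫ b)).symm
    change h ≫ (𝟙 A)⟦(1:ℤ)⟧' = j ≫ δ at h2
    rw [CategoryTheory.Functor.map_id, Category.comp_id] at h2
    exact ⟨j, h1, h2⟩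
  obtain ⟨s, hs⟩ : ∃ s : R₀⟦(1:ℤ)⟧ ⟶ W, a'⟦(1:ℤ)⟧' = s ≫ δ := by
    refine Triangle.coyoneda_exact₁ _ hW (a'⟦(1:ℤ)⟧') ?_
    change a'⟦(1:ℤ)⟧' ≫ (f ≫ b)⟦(1:ℤ)⟧' = 0
    rw [← Functor.map_comp, ← Category.assoc, ← ha', hab, Functor.map_zero]
  obtain ⟨q, hq⟩ : ∃ q : W ⟶ R₀⟦(1:ℤ)⟧, δ ≫ f⟦(1:ℤ)⟧' = q ≫ a⟦(1:ℤ)⟧' := by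
    obtain ⟨q, hq⟩ := Triangle.coyoneda_exact₁ _ (rot_of_distTriang _ htri) (δ ≫ f⟦(1:ℤ)⟧')
      (by
        change (δ ≫ f⟦(1:ℤ)⟧') ≫ b⟦(1:ℤ)⟧' = 0
        rw [Category.assoc, ← Functor.map_comp, hδ])
    refine ⟨-q, hq.trans ?_⟩
    change q ≫ (-a⟦(1:ℤ)⟧') = (-q) ≫ a⟦(1:ℤ)⟧'
    exact (Preadditive.comp_neg _ _).trans (Preadditive.neg_comp _ _).symm
  obtain ⟨u, hu⟩ : ∃ u : W ⟶ B', δ - q ≫ a'⟦(1:ℤ)⟧' = u ≫ h := by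
    refine Triangle.coyoneda_exact₁ _ hT (δ - q ≫ a'⟦(1:ℤ)⟧') ?_
    change (δ - q ≫ a'⟦(1:ℤ)⟧') ≫ f⟦(1:ℤ)⟧' = 0
    rw [Preadditive.sub_comp, hq, ha', Functor.map_comp, Category.assoc, sub_self]
  obtain ⟨v, hv⟩ : ∃ v : W ⟶ M, 𝟙 W - q ≫ s - u ≫ j = v ≫ w := by
    refine Triangle.coyoneda_exact₃ _ hW (𝟙 W - q ≫ s - u ≫ j) ?_
    change (𝟙 W - q ≫ s - u ≫ j) ≫ δ = 0
    simp only [Preadditive.sub_comp, Category.assoc, Category.id_comp, ← hs, ← hj₂, hu, sub_self]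
  obtain ⟨ε, hε⟩ : ∃ ε : M ⟶ B', g = b ≫ ε := Triangle.yoneda_exact₂ _ htri g hag
  obtain ⟨γ, hγ⟩ : ∃ γ : R₀⟦(1:ℤ)⟧ ⟶ W, w - ε ≫ j = c ≫ γ := by
    refine Triangle.yoneda_exact₃ _ htri (w - ε ≫ j) ?_
    change b ≫ (w - ε ≫ j) = 0
    rw [Preadditive.comp_sub, ← Category.assoc, ← hε, hj₁, sub_self]
  have hid : 𝟙 W = q ≫ s + (u + v ≫ ε) ≫ j + (v ≫ c) ≫ γ := by
    have h1 : 𝟙 W = v ≫ w + u ≫ j + q ≫ s := by rw [← hv]; abel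
    have h2 : w = c ≫ γ + ε ≫ j := by rw [← hγ]; abel
    rw [h1]
    conv_lhs => rw [h2]
    simp only [Preadditive.add_comp, Preadditive.comp_add, Category.assoc]
    abel
  exact ⟨A, hA, W, mem_shiftSet_of_retract 𝓡 h𝓡sub hR₀ hB e q (v ≫ c) _ s γ j hid,
    f ≫ b, w, δ, hW⟩
end

section
/- Let R be a rigid subcategory of C, R₀ ∈ R and X ∈ R∗R[1]. If R₀ → U → X → R₀[1] is a triangle in C, then U ∈ R∗R[1]. -/
/-!
Setting: `C` is a Hom-finite Krull–Schmidt `k`-linear triangulated category over an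
algebraically closed field `k` (Krull–Schmidt is encoded as Hom-finiteness together with
idempotent completeness). Subcategories are identified with their classes of objects and
are always assumed full, closed under isomorphisms, direct sums and direct summands.
-/

open CategoryTheory CategoryTheory.Limits CategoryTheory.Pretriangulated Opposite

universe v u

variable {C : Type u} [Category.{v} C] [Preadditive C] [HasZeroObject C] [HasShift C ℤ]
  [∀ n : ℤ, (shiftFunctor C n).Additive] [Pretriangulated C]

/-- Existence of a minimal idempotent fixing `δ` on the left, in a Hom-finite category. -/
theorem exists_min_idem {D : Type*} [Category D] [Preadditive D] (k : Type*) [Field k]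
    [Linear k D] {A B : D} [FiniteDimensional k (A ⟶ A)] (δ : A ⟶ B) :
    ∃ π : A ⟶ A, π ≫ π = π ∧ π ≫ δ = δ ∧
      (∀ e : A ⟶ A, e ≫ δ = δ → ∀ x : A ⟶ A, x ≫ π = x → x ≫ e = 0 → x = 0) ∧
      (∀ e : A ⟶ A, e ≫ δ = δ → e ≫ π = e → ∃ y : A ⟶ A, y ≫ e = π) := by
  classical
  let rk : (A ⟶ A) → ℕ := fun f => Module.finrank k (LinearMap.range (Linear.rightComp k A f))
  let S : Set (A ⟶ A) := {f | f ≫ δ = δ}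
  have hS : S.Nonempty := ⟨𝟙 A, Category.id_comp δ⟩
  obtain ⟨f, hf, hmin⟩ : ∃ f ∈ S, ∀ e ∈ S, rk f ≤ rk e := by
    obtain ⟨f, hf, h⟩ := (measure rk).wf.has_min S hS
    exact ⟨f, hf, fun e he => not_lt.1 (h e he)⟩
  have hf' : f ≫ δ = δ := hf
  have key : ∀ e : A ⟶ A, e ≫ δ = δ → ∀ x : A ⟶ A, x ≫ f ≫ e = 0 → x ≫ f = 0 := by
    intro e he x hx
    have h1 : rk f ≤ rk (f ≫ e) := hmin _ (by change (f ≫ e) ≫ δ = δ; rw [Category.assoc, he, hf'])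
    have hle : LinearMap.ker (Linear.rightComp k A f) ≤
        LinearMap.ker (Linear.rightComp k A (f ≫ e)) := by
      intro z hz
      have hz' : z ≫ f = 0 := hz
      change z ≫ f ≫ e = 0
      rw [← Category.assoc, hz', zero_comp]
    have h2 := LinearMap.finrank_range_add_finrank_ker (Linear.rightComp k A f)
    have h3 := LinearMap.finrank_range_add_finrank_ker (Linear.rightComp k A (f ≫ e))
    have h4 := Submodule.eq_of_le_of_finrank_le hle (by
      change Module.finrank k _ ≤ Module.finrank k _ at h1
      omega)
    have : x ∈ LinearMap.ker (Linear.rightComp k A (f ≫ e)) := hx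
    rw [← h4] at this
    exact this
  -- finite-dimensional surjectivity
  have surj : ∀ p e : A ⟶ A, (∀ x : A ⟶ A, (x ≫ p) ≫ e = 0 → x ≫ p = 0) →
      (∀ x : A ⟶ A, ∃ y, (x ≫ p) ≫ e = y ≫ p) → ∀ x : A ⟶ A, ∃ y, (y ≫ p) ≫ e = x ≫ p := by
    intro p e hinj hmap x
    let I := LinearMap.range (Linear.rightComp k A p)
    have hI : ∀ z ∈ I, Linear.rightComp k A e z ∈ I := by
      rintro _ ⟨z, rfl⟩
      obtain ⟨y, hy⟩ := hmap z
      exact ⟨y, hy.symm⟩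
    let T := (Linear.rightComp k A e).restrict hI
    have hT : Function.Injective T := by
      rw [← LinearMap.ker_eq_bot, LinearMap.ker_eq_bot']
      rintro ⟨_, z, rfl⟩ hz
      apply Subtype.ext
      exact hinj z (congrArg Subtype.val hz)
    obtain ⟨⟨_, y, rfl⟩, hy⟩ := LinearMap.injective_iff_surjective.1 hT ⟨x ≫ p, x, rfl⟩
    exact ⟨y, congrArg Subtype.val hy⟩
  obtain ⟨x, hx⟩ := surj f f (fun x hx => key f hf' x (by rwa [Category.assoc] at hx))
    (fun x => ⟨x ≫ f, rfl⟩) (𝟙 A)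
  rw [Category.id_comp] at hx
  have hidem : (x ≫ f) ≫ (x ≫ f) = x ≫ f := by
    have h := key f hf' ((x ≫ f) ≫ x - x) (by
      simp only [Category.assoc] at hx
      simp only [Preadditive.sub_comp, Category.assoc, hx, sub_self])
    rw [Preadditive.sub_comp, sub_eq_zero] at h
    simpa only [Category.assoc] using h
  have hfix : (x ≫ f) ≫ δ = δ := by
    have := hx =≫ δ
    rw [Category.assoc, hf'] at this
    exact this
  have hinj : ∀ e : A ⟶ A, e ≫ δ = δ → ∀ z : A ⟶ A, z ≫ (x ≫ f) = z → z ≫ e = 0 → z = 0 := by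
    intro e he z hz hze
    have := key e he (z ≫ x) (by
      rw [← hz] at hze
      simpa only [Category.assoc] using hze)
    rw [Category.assoc, hz] at this
    exact this
  refine ⟨x ≫ f, hidem, hfix, hinj, ?_⟩
  intro e he hep
  obtain ⟨y, hy⟩ := surj (x ≫ f) e
    (fun z hz => hinj e he _ (by rw [Category.assoc, hidem]) hz)
    (fun z => ⟨(z ≫ (x ≫ f)) ≫ e, by rw [Category.assoc _ e, hep]⟩) (𝟙 A)
  exact ⟨_, hy.trans (Category.id_comp _)⟩

/-- Two weakly exact sequences `U → A → B` and `U → W → B` whose maps factor through each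
other have isomorphic middle terms. -/
theorem iso_of_weak_exact {D : Type*} [Category D] [Preadditive D] (k : Type*) [Field k]
    [Linear k D] {U A W B : D} [FiniteDimensional k (A ⟶ A)]
    (β : U ⟶ A) (n : U ⟶ W) (δ : A ⟶ B) (d : W ⟶ B)
    (hβδ : β ≫ δ = 0) (hnd : n ≫ d = 0)
    (hA : ∀ x : A ⟶ A, x ≫ δ = 0 → ∃ t : A ⟶ U, t ≫ β = x)
    (hW : ∀ x : W ⟶ W, x ≫ d = 0 → ∃ t : W ⟶ U, t ≫ n = x)
    (v : W ⟶ A) (hv : n ≫ v = β) (r : A ⟶ W) (hr : β ≫ r = n)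
    (u : A ⟶ W) (hu : u ≫ d = δ) (w : W ⟶ A) (hw : w ≫ δ = d) : Nonempty (W ≅ A) := by
  obtain ⟨π, hπ, hπδ, hinj, hsurj⟩ := exists_min_idem k δ
  obtain ⟨σ, hσ, hqδ⟩ : ∃ q : A ⟶ A, q = 𝟙 A - π ∧ q ≫ δ = 0 :=
    ⟨_, rfl, by rw [Preadditive.sub_comp, hπδ, Category.id_comp, sub_self]⟩
  have hσσ : σ ≫ σ = σ := by
    rw [hσ]; simp [hπ]
  have hσπ : σ ≫ π = 0 := by rw [hσ]; simp [hπ]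
  have hπσ : π ≫ σ = 0 := by rw [hσ]; simp [hπ]
  obtain ⟨τ₀, hτ₀⟩ := hA σ hqδ
  obtain ⟨τ, hτ, hτβ⟩ : ∃ τ : A ⟶ U, σ ≫ τ = τ ∧ τ ≫ β = σ :=
    ⟨σ ≫ τ₀, by rw [← Category.assoc, hσσ], by rw [Category.assoc, hτ₀, hσσ]⟩
  obtain ⟨s, hs, hns⟩ : ∃ s : W ⟶ A, s ≫ σ = s ∧ n ≫ s = β ≫ σ :=
    ⟨v ≫ σ, by rw [Category.assoc, hσσ], by rw [← Category.assoc, hv]⟩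
  have hτns : τ ≫ n ≫ s = σ := by rw [hns, ← Category.assoc, hτβ, hσσ]
  have hsπ : s ≫ π = 0 := by rw [← hs, Category.assoc, hσπ, comp_zero]
  have hsδ : s ≫ δ = 0 := by rw [← hs, Category.assoc, hqδ, comp_zero]
  obtain ⟨w₁, hw₁δ, hw₁π, hτw₁⟩ : ∃ w₁ : W ⟶ A, w₁ ≫ δ = d ∧ w₁ ≫ π = w₁ ∧
      τ ≫ n ≫ w₁ = 0 := by
    refine ⟨w ≫ π - s ≫ τ ≫ n ≫ w ≫ π, ?_, ?_, ?_⟩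
    · simp only [Preadditive.sub_comp, Category.assoc, hπδ, hw, hnd, comp_zero, sub_zero]
    · simp only [Preadditive.sub_comp, Category.assoc, hπ]
    · have : τ ≫ n ≫ s ≫ τ = τ := by
        have h := hτns =≫ τ
        simpa only [Category.assoc, hτ] using h
      have h2 := this =≫ (n ≫ w ≫ π)
      simp only [Category.assoc] at h2
      simp only [Preadditive.comp_sub, h2, sub_self]
  have hw₁σ : w₁ ≫ σ = 0 := by rw [← hw₁π, Category.assoc, hπσ, comp_zero]
  obtain ⟨y, hy⟩ := hsurj (π ≫ u ≫ w₁) (by simp only [Category.assoc, hw₁δ, hu, hπδ])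
    (by simp only [Category.assoc, hw₁π])
  obtain ⟨w', hw'⟩ : ∃ w' : W ⟶ A, w' = w₁ + s := ⟨_, rfl⟩
  have hw'δ : w' ≫ δ = d := by rw [hw', Preadditive.add_comp, hw₁δ, hsδ, add_zero]
  have hw'σ : w' ≫ σ = s := by rw [hw', Preadditive.add_comp, hw₁σ, hs, zero_add]
  obtain ⟨u', hu'⟩ : ∃ u' : A ⟶ W, u' ≫ w' = 𝟙 A := by
    refine ⟨y ≫ π ≫ u + τ ≫ n - (y ≫ π ≫ u ≫ s) ≫ τ ≫ n, ?_⟩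
    have e1 : τ ≫ n ≫ w' = σ := by
      rw [hw', Preadditive.comp_add, Preadditive.comp_add, hτw₁, hτns, zero_add]
    have e2 : y ≫ π ≫ u ≫ w' = π + y ≫ π ≫ u ≫ s := by
      rw [hw']; simp only [Preadditive.comp_add, hy]
    simp only [Preadditive.add_comp, Preadditive.sub_comp, Category.assoc, e1, e2, hs]
    rw [hσ]; abel
  obtain ⟨ε, hε⟩ : ∃ ε : W ⟶ W, ε = 𝟙 W - w' ≫ u' := ⟨_, rfl⟩
  have hεw : ε ≫ w' = 0 := by
    rw [hε]; simp only [Preadditive.sub_comp, Category.assoc, hu', Category.id_comp,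
      Category.comp_id, sub_self]
  have hεε : ε ≫ ε = ε := by
    conv_lhs => rhs; rw [hε]
    rw [Preadditive.comp_sub, ← Category.assoc, hεw, zero_comp, sub_zero, Category.comp_id]
  obtain ⟨l, hl⟩ := hW ε (by rw [← hw'δ, ← Category.assoc, hεw, zero_comp])
  obtain ⟨κ, hκ⟩ : ∃ κ : W ⟶ A, κ = ε ≫ l ≫ β := ⟨_, rfl⟩
  have hκδ : κ ≫ δ = 0 := by rw [hκ]; simp only [Category.assoc, hβδ, comp_zero]
  have hκσ : κ ≫ σ = 0 := by
    rw [hκ, Category.assoc, Category.assoc, ← hns, ← Category.assoc l, hl, ← hw'σ,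
      ← Category.assoc ε w', hεw, zero_comp, comp_zero]
  have hκπ : κ ≫ π = κ := by
    rw [hσ, Preadditive.comp_sub, Category.comp_id, sub_eq_zero] at hκσ
    exact hκσ.symm
  have hκr : κ ≫ r = ε := by rw [hκ, Category.assoc, Category.assoc, hr, hl, hεε]
  have hεκ : ε ≫ κ = κ := by rw [hκ, ← Category.assoc, hεε]
  have hz : r ≫ κ = 0 := by
    refine hinj (𝟙 A - r ≫ κ) ?_ (r ≫ κ) ?_ ?_
    · simp only [Preadditive.sub_comp, Category.assoc, hκδ, comp_zero, sub_zero, Category.id_comp]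
    · rw [Category.assoc, hκπ]
    · have : κ ≫ r ≫ κ = κ := by rw [← Category.assoc, hκr, hεκ]
      simp only [Preadditive.comp_sub, Category.assoc, this, Category.comp_id, sub_self]
  have hε0 : ε = 0 := by
    rw [← hεε, ← hκr, Category.assoc, ← Category.assoc r, hz, zero_comp, comp_zero]
  rw [hε, sub_eq_zero] at hε0
  exact Nonempty.intro (Iso.mk w' u' hε0.symm hu' : W ≅ A)

/-- **Lemma (Statement 17).** Let `𝓡` be a rigid subcategory of `C`, `R₀ ∈ 𝓡` and
`X ∈ 𝓡 ∗ 𝓡[1]`. If `R₀ → U → X → R₀⟦1⟧` is a triangle in `C`, then `U ∈ 𝓡 ∗ 𝓡[1]`. -/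
theorem extension_mem_twoTerm
    (k : Type*) [Field k] [IsAlgClosed k] [Linear k C]
    [∀ X Y : C, FiniteDimensional k (X ⟶ Y)] [IsIdempotentComplete C]
    (𝓡 : Set C) (h𝓡sub : IsSubcat 𝓡) (h𝓡 : IsRigidSubcat 𝓡)
    (R₀ U X : C) (hR₀ : R₀ ∈ 𝓡) (hX : X ∈ twoTerm 𝓡)
    (a : R₀ ⟶ U) (b : U ⟶ X) (c : X ⟶ R₀⟦(1:ℤ)⟧)
    (htri : Triangle.mk a b c ∈ distTriang C) :
    U ∈ twoTerm 𝓡 := by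
  obtain ⟨R₁, hR₁, A, hA, f, g, h, hT⟩ := hX
  have hfc : f ≫ c = 0 := h𝓡 R₁ hR₁ R₀ hR₀ _
  obtain ⟨c', hc'⟩ : ∃ c' : A ⟶ R₀⟦(1:ℤ)⟧, c = g ≫ c' := Triangle.yoneda_exact₂ _ hT c hfc
  obtain ⟨F, hF1, hF2⟩ : ∃ F : R₁⟦(1:ℤ)⟧ ⟶ U⟦(1:ℤ)⟧,
      h ≫ F = c' ≫ (-a⟦(1:ℤ)⟧') ∧ (-f⟦(1:ℤ)⟧') ≫ 𝟙 _ = F ≫ (-b⟦(1:ℤ)⟧') := by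
    obtain ⟨F, h1, h2⟩ := Pretriangulated.complete_distinguished_triangle_morphism _ _
      (rot_of_distTriang _ hT) (rot_of_distTriang _ (rot_of_distTriang _ htri))
      (𝟙 X) c' (hc'.symm.trans (Category.id_comp c).symm)
    refine ⟨F, h1, ?_⟩
    rw [← CategoryTheory.Functor.map_id]
    exact h2
  obtain ⟨f', rfl⟩ := (shiftFunctor C (1:ℤ)).map_surjective F
  have hf'b : f' ≫ b = f := by
    apply (shiftFunctor C (1:ℤ)).map_injective
    rw [Functor.map_comp]
    simpa using hF2.symm
  have hrel : c' ≫ a⟦(1:ℤ)⟧' + h ≫ f'⟦(1:ℤ)⟧' = 0 := by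
    rw [hF1]; simp
  have : HasBinaryBiproducts C := inferInstance
  obtain ⟨W, n, d, hM⟩ := distinguished_cocone_triangle (biprod.desc a f')
  have hab : a ≫ b = 0 := comp_distTriang_mor_zero₁₂ _ htri
  have hbc : b ≫ c = 0 := comp_distTriang_mor_zero₂₃ _ htri
  have hca : c ≫ a⟦(1:ℤ)⟧' = 0 := comp_distTriang_mor_zero₃₁ _ htri
  have hfg : f ≫ g = 0 := comp_distTriang_mor_zero₁₂ _ hT
  have hgh : g ≫ h = 0 := comp_distTriang_mor_zero₂₃ _ hT
  have hmn : biprod.desc a f' ≫ n = 0 := comp_distTriang_mor_zero₁₂ _ hM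
  have hnd : n ≫ d = 0 := comp_distTriang_mor_zero₂₃ _ hM
  have hdm : d ≫ (biprod.desc a f')⟦(1:ℤ)⟧' = 0 := comp_distTriang_mor_zero₃₁ _ hM
  have han : a ≫ n = 0 := by simpa using (biprod.inl : R₀ ⟶ R₀ ⊞ R₁) ≫= hmn
  have hf'n : f' ≫ n = 0 := by simpa using (biprod.inr : R₁ ⟶ R₀ ⊞ R₁) ≫= hmn
  have htot : ∀ {Y : C} (z : Y ⟶ (R₀ ⊞ R₁)⟦(1:ℤ)⟧),
      z = (z ≫ (biprod.fst : R₀ ⊞ R₁ ⟶ R₀)⟦(1:ℤ)⟧') ≫ (biprod.inl : R₀ ⟶ R₀ ⊞ R₁)⟦(1:ℤ)⟧' +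
        (z ≫ (biprod.snd : R₀ ⊞ R₁ ⟶ R₁)⟦(1:ℤ)⟧') ≫ (biprod.inr : R₁ ⟶ R₀ ⊞ R₁)⟦(1:ℤ)⟧' := by
    intro Y z
    rw [Category.assoc, Category.assoc, ← Preadditive.comp_add, ← Functor.map_comp,
      ← Functor.map_comp, ← Functor.map_add, biprod.total, CategoryTheory.Functor.map_id, Category.comp_id]
  have hinla : (biprod.inl : R₀ ⟶ R₀ ⊞ R₁)⟦(1:ℤ)⟧' ≫ (biprod.desc a f')⟦(1:ℤ)⟧' =
      a⟦(1:ℤ)⟧' := by rw [← Functor.map_comp, biprod.inl_desc]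
  have hinrf : (biprod.inr : R₁ ⟶ R₀ ⊞ R₁)⟦(1:ℤ)⟧' ≫ (biprod.desc a f')⟦(1:ℤ)⟧' =
      f'⟦(1:ℤ)⟧' := by rw [← Functor.map_comp, biprod.inr_desc]
  obtain ⟨d₀, d₁, hd⟩ : ∃ (d₀ : W ⟶ R₀⟦(1:ℤ)⟧) (d₁ : W ⟶ R₁⟦(1:ℤ)⟧),
      d = d₀ ≫ (biprod.inl : R₀ ⟶ R₀ ⊞ R₁)⟦(1:ℤ)⟧' +
        d₁ ≫ (biprod.inr : R₁ ⟶ R₀ ⊞ R₁)⟦(1:ℤ)⟧' := ⟨_, _, htot d⟩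
  have hd01 : d₀ ≫ a⟦(1:ℤ)⟧' + d₁ ≫ f'⟦(1:ℤ)⟧' = 0 := by
    rw [hd] at hdm
    simpa only [Preadditive.add_comp, Category.assoc, hinla, hinrf] using hdm
  obtain ⟨δ, hδ⟩ : ∃ δ : A ⟶ (R₀ ⊞ R₁)⟦(1:ℤ)⟧,
      δ = c' ≫ (biprod.inl : R₀ ⟶ R₀ ⊞ R₁)⟦(1:ℤ)⟧' +
        h ≫ (biprod.inr : R₁ ⟶ R₀ ⊞ R₁)⟦(1:ℤ)⟧' := ⟨_, rfl⟩
  have hδm : δ ≫ (biprod.desc a f')⟦(1:ℤ)⟧' = 0 := by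
    rw [hδ]
    simpa only [Preadditive.add_comp, Category.assoc, hinla, hinrf] using hrel
  have hδ0 : δ ≫ (biprod.fst : R₀ ⊞ R₁ ⟶ R₀)⟦(1:ℤ)⟧' = c' := by
    rw [hδ]
    simp [← Functor.map_comp]
  have hδ1 : δ ≫ (biprod.snd : R₀ ⊞ R₁ ⟶ R₁)⟦(1:ℤ)⟧' = h := by
    rw [hδ]
    simp [← Functor.map_comp]
  have hgδ : (b ≫ g) ≫ δ = 0 := by
    rw [hδ, Preadditive.comp_add]
    simp only [Category.assoc]
    rw [← Category.assoc g c', ← hc', ← Category.assoc g h, hgh, ← Category.assoc b c, hbc]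
    simp
  -- `u`
  obtain ⟨u, hu⟩ : ∃ u : A ⟶ W, δ = u ≫ d :=
    Triangle.coyoneda_exact₁ _ hM δ hδm
  -- `w`
  obtain ⟨w, hw⟩ : ∃ w : W ⟶ A, w ≫ δ = d := by
    have h1 : d₁ ≫ f⟦(1:ℤ)⟧' = 0 := by
      have := hd01 =≫ b⟦(1:ℤ)⟧'
      simpa only [Preadditive.add_comp, Category.assoc, ← Functor.map_comp, hab, hf'b,
        Functor.map_zero, comp_zero, zero_add, zero_comp] using this
    obtain ⟨w, hw⟩ : ∃ w : W ⟶ A, d₁ = w ≫ h := Triangle.coyoneda_exact₁ _ hT d₁ h1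
    have h2 : (d₀ - w ≫ c') ≫ a⟦(1:ℤ)⟧' = 0 := by
      have e1 := w ≫= hrel
      rw [hw] at hd01
      rw [Preadditive.comp_add, comp_zero] at e1
      rw [Category.assoc] at hd01
      rw [Preadditive.sub_comp, Category.assoc, sub_eq_zero]
      exact add_right_cancel (hd01.trans e1.symm)
    obtain ⟨t, ht⟩ : ∃ t : W ⟶ X, d₀ - w ≫ c' = t ≫ c :=
      Triangle.coyoneda_exact₁ _ htri _ h2
    refine ⟨w + t ≫ g, ?_⟩
    have e0 : (w + t ≫ g) ≫ c' = d₀ := by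
      rw [Preadditive.add_comp, Category.assoc, ← hc', ← ht]; abel
    have e1 : (w + t ≫ g) ≫ h = d₁ := by
      rw [Preadditive.add_comp, Category.assoc, hgh, comp_zero, add_zero, hw]
    rw [hδ, Preadditive.comp_add, ← Category.assoc, ← Category.assoc, e0, e1, hd]
  -- `v`
  obtain ⟨v, hv⟩ : ∃ v : W ⟶ A, b ≫ g = n ≫ v := Triangle.yoneda_exact₂ _ hM (b ≫ g) (by
    change biprod.desc a f' ≫ b ≫ g = 0
    apply biprod.hom_ext'
    · rw [biprod.inl_desc_assoc, ← Category.assoc, hab, zero_comp, comp_zero]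
    · rw [biprod.inr_desc_assoc, ← Category.assoc, hf'b, hfg, comp_zero])
  -- `r`
  obtain ⟨r, hr⟩ : ∃ r : A ⟶ W, (b ≫ g) ≫ r = n := by
    obtain ⟨ρ, hρ⟩ : ∃ ρ : X ⟶ W, n = b ≫ ρ := Triangle.yoneda_exact₂ _ htri n han
    have : f ≫ ρ = 0 := by rw [← hf'b, Category.assoc, ← hρ, hf'n]
    obtain ⟨r, hr⟩ : ∃ r : A ⟶ W, ρ = g ≫ r := Triangle.yoneda_exact₂ _ hT ρ this
    exact ⟨r, by rw [Category.assoc, ← hr, ← hρ]⟩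
  obtain ⟨i⟩ := iso_of_weak_exact k (b ≫ g) n δ d hgδ hnd
    (by
      intro x hx
      have h0 : x ≫ c' = 0 := by rw [← hδ0, ← Category.assoc, hx, zero_comp]
      have h1 : x ≫ h = 0 := by rw [← hδ1, ← Category.assoc, hx, zero_comp]
      obtain ⟨s, hs⟩ : ∃ s : A ⟶ X, x = s ≫ g := Triangle.coyoneda_exact₃ _ hT x h1
      have h2 : s ≫ c = 0 := by rw [hc', ← Category.assoc, ← hs, h0]
      obtain ⟨t, ht⟩ : ∃ t : A ⟶ U, s = t ≫ b := Triangle.coyoneda_exact₃ _ htri s h2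
      exact ⟨t, by rw [hs, ht, Category.assoc]⟩)
    (by
      intro x hx
      obtain ⟨t, ht⟩ : ∃ t : W ⟶ U, x = t ≫ n := Triangle.coyoneda_exact₃ _ hM x hx
      exact ⟨t, ht.symm⟩)
    v hv.symm r hr u hu.symm w hw
  obtain ⟨R₂, hR₂, ⟨j⟩⟩ := hA
  refine ⟨R₀ ⊞ R₁, ?_, W, ⟨R₂, hR₂, ⟨i ≪≫ j⟩⟩, biprod.desc a f', n, d, hM⟩
  exact h𝓡sub.2.1 hR₀ hR₁ ⟨biprod.inl, biprod.inr, biprod.fst, biprod.snd, by simp, by simp,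
    by simp, by simp, biprod.total⟩
end

section
/- Let R be a rigid subcategory of C and X an R[1]-rigid subcategory of C. Let M be an object of C with [R[1]](M, X[1]) = 0, let R₁ →f R₀ →g M →h R₁[1] be a triangle with R₀, R₁ ∈ R, and let u : R₀ → X₁ be a left X-approximation of R₀. Then uf : R₁ → X₁ is a left X-approximation of R₁. -/
/-!
Setting: `C` is a Hom-finite Krull–Schmidt `k`-linear triangulated category over an
algebraically closed field `k` (Krull–Schmidt is encoded as Hom-finiteness together with
idempotent completeness). Subcategories are identified with their classes of objects and
are always assumed full, closed under isomorphisms, direct sums and direct summands.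
-/

open CategoryTheory CategoryTheory.Limits CategoryTheory.Pretriangulated Opposite

universe v u

variable {C : Type u} [Category.{v} C] [Preadditive C] [HasZeroObject C] [HasShift C ℤ]
  [∀ n : ℤ, (shiftFunctor C n).Additive] [Pretriangulated C]

/-- **Lemma (Statement 18).** Let `𝓡` be rigid and `𝓧` an `𝓡[1]`-rigid subcategory. Let
`M` satisfy `[𝓡[1]](M, 𝓧[1]) = 0`, let `R₁ → R₀ → M → R₁⟦1⟧` be a triangle with
`R₀, R₁ ∈ 𝓡`, and let `u : R₀ ⟶ X₁` be a left `𝓧`-approximation. Then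
`f ≫ u : R₁ ⟶ X₁` is a left `𝓧`-approximation of `R₁`. -/
theorem comp_leftApprox_is_leftApprox
    (k : Type*) [Field k] [IsAlgClosed k] [Linear k C]
    [∀ X Y : C, FiniteDimensional k (X ⟶ Y)] [IsIdempotentComplete C]
    (𝓡 𝓧 : Set C) (h𝓡sub : IsSubcat 𝓡) (h𝓡 : IsRigidSubcat 𝓡)
    (h𝓧sub : IsSubcat 𝓧) (h𝓧rig : IsRelRigid 𝓡 𝓧)
    (M : C) (hM : relOrthTo 𝓡 𝓧 M)
    (R₁ R₀ : C) (hR₁ : R₁ ∈ 𝓡) (hR₀ : R₀ ∈ 𝓡)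
    (f : R₁ ⟶ R₀) (g : R₀ ⟶ M) (h : M ⟶ R₁⟦(1:ℤ)⟧)
    (htri : Triangle.mk f g h ∈ distTriang C)
    (X₁ : C) (hX₁ : X₁ ∈ 𝓧) (u : R₀ ⟶ X₁) (hu : IsLeftApprox 𝓧 u) :
    IsLeftApprox 𝓧 (f ≫ u) := by
  intro X' hX' a
  have h0 : h ≫ a⟦(1:ℤ)⟧' = 0 := hM X' hX' _ ⟨R₁, hR₁, h, a⟦(1:ℤ)⟧', rfl⟩
  obtain ⟨b, hb⟩ : ∃ b : R₀⟦(1:ℤ)⟧ ⟶ X'⟦(1:ℤ)⟧, a⟦(1:ℤ)⟧' = (-f⟦(1:ℤ)⟧') ≫ b :=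
    Triangle.yoneda_exact₃ _ (rot_of_distTriang _ htri) (a⟦(1:ℤ)⟧') h0
  obtain ⟨c, hc⟩ := (shiftFunctor C (1:ℤ)).map_surjective b
  have hfc : f ≫ (-c) = a := by
    apply (shiftFunctor C (1:ℤ)).map_injective
    rw [hb, ← hc]
    simp
  obtain ⟨d, hd⟩ := hu X' hX' (-c)
  exact ⟨d, by rw [Category.assoc, hd, hfc]⟩
end

section
/- Let R be a rigid subcategory of C and X a two-term weak R[1]-cluster tilting subcategory of C. Then Ker(H(X)) = R ∩ X[-1]; that is, for an object R ∈ R one has Hom_C(R, X) = 0 for all X ∈ X if and only if R ∈ X[-1]. -/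
/-!
Setting: `C` is a Hom-finite Krull–Schmidt `k`-linear triangulated category over an
algebraically closed field `k` (Krull–Schmidt is encoded as Hom-finiteness together with
idempotent completeness). Subcategories are identified with their classes of objects and
are always assumed full, closed under isomorphisms, direct sums and direct summands.
-/

open CategoryTheory CategoryTheory.Limits CategoryTheory.Pretriangulated Opposite

universe v u

variable {C : Type u} [Category.{v} C] [Preadditive C] [HasZeroObject C] [HasShift C ℤ]
  [∀ n : ℤ, (shiftFunctor C n).Additive] [Pretriangulated C]

/-- **Lemma (Statement 19).** Let `𝓡` be rigid and `𝓧` a two-term weak `𝓡[1]`-cluster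
tilting subcategory. Then `Ker(ℍ(𝓧)) = 𝓡 ∩ 𝓧[-1]`: for `R ∈ 𝓡`, one has
`Hom_C(R, X) = 0` for all `X ∈ 𝓧` if and only if `R ∈ 𝓧[-1]`. -/
theorem ker_eq_inter_shiftNegOne
    (k : Type*) [Field k] [IsAlgClosed k] [Linear k C]
    [∀ X Y : C, FiniteDimensional k (X ⟶ Y)] [IsIdempotentComplete C]
    (𝓡 𝓧 : Set C) (h𝓡sub : IsSubcat 𝓡) (h𝓡 : IsRigidSubcat 𝓡)
    (h𝓧sub : IsSubcat 𝓧) (h𝓧 : IsTwoTermWeakRelCT 𝓡 𝓧) :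
    ∀ R ∈ 𝓡, (∀ X ∈ 𝓧, ∀ φ : R ⟶ X, φ = 0) ↔ R ∈ shiftSet 𝓧 (-1) := by
  intro R hR
  obtain ⟨-, hstar, hchar⟩ := h𝓧
  constructor
  · intro h0
    obtain ⟨A, ⟨X₁, hX₁, ⟨e⟩⟩, X₂, hX₂, f, g, h, hT⟩ := hstar R hR
    have hg : g = 0 := h0 X₂ hX₂ g
    obtain ⟨s, hs⟩ : ∃ s : R ⟶ A, 𝟙 R = s ≫ f := Triangle.coyoneda_exact₂ _ hT (𝟙 R) (by
      change 𝟙 R ≫ g = 0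
      rw [hg, comp_zero])
    have hmem : R⟦(1:ℤ)⟧ ∈ 𝓧 := by
      refine h𝓧sub.2.2 hX₁ ⟨(s ≫ e.hom)⟦(1:ℤ)⟧' ≫ (shiftNegShift X₁ (1:ℤ)).hom,
        (shiftNegShift X₁ (1:ℤ)).inv ≫ (e.inv ≫ f)⟦(1:ℤ)⟧', ?_⟩
      rw [Category.assoc, Iso.hom_inv_id_assoc, ← Functor.map_comp, Category.assoc,
        Iso.hom_inv_id_assoc, ← hs, CategoryTheory.Functor.map_id]
    exact ⟨R⟦(1:ℤ)⟧, hmem, ⟨(shiftShiftNeg R (1:ℤ)).symm⟩⟩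
  · rintro ⟨X₀, hX₀, ⟨e⟩⟩ X hX φ
    let i : R⟦(1:ℤ)⟧ ≅ X₀ := (shiftFunctor C (1:ℤ)).mapIso e ≪≫ shiftNegShift X₀ (1:ℤ)
    have h1 : i.inv ≫ φ⟦(1:ℤ)⟧' = 0 :=
      ((hchar X₀).1 hX₀).2.1 X hX _ ⟨R, hR, i.inv, φ⟦(1:ℤ)⟧', rfl⟩
    have h2 : φ⟦(1:ℤ)⟧' = 0 := by
      rw [← cancel_epi i.inv, h1, comp_zero]
    apply (shiftFunctor C (1:ℤ)).map_injective
    rw [h2, Functor.map_zero]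
end
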